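/- Let p ∈ [3/2, 9/4) and let (u, w, b, Π) be a smooth solution of the stationary magneto-micropolar equations on ℝ³ with u, b, w bounded on ℝ³. Then there exists a constant C > 0 (depending only on p and on ‖u‖_{L^∞}, ‖b‖_{L^∞}, ‖w‖_{L^∞}) such that for all R > 1: ∫_{B_R} (|∇u|² + |∇b|² + |∇w|²) dx ≤ C (R^{1 − 9/(2p)} + R^{2 − 9/(2p)}) (‖u‖_{L^p(B_{2R})} + ‖b‖_{L^p(B_{2R})} + ‖w‖_{L^p(B_{2R})})^{3/2}. -/

import Mathlib

open MeasureTheory Real Filter Metric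
open scoped Topology ENNReal

noncomputable section

/-- Three-dimensional Euclidean space. -/
abbrev E3 := EuclideanSpace ℝ (Fin 3)

/-- Partial derivative in the `i`-th coordinate direction. -/
def pd (i : Fin 3) (f : E3 → ℝ) (x : E3) : ℝ := fderiv ℝ f x (EuclideanSpace.single i 1)

/-- Laplacian of a scalar function. -/
def lap (f : E3 → ℝ) (x : E3) : ℝ := ∑ i, pd i (fun y => pd i f y) x

/-- Divergence of a vector field. -/
def vdiv (v : E3 → E3) (x : E3) : ℝ := ∑ i, pd i (fun y => v y i) x

/-- Curl of a vector field on ℝ³. -/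
def curl3 (v : E3 → E3) (x : E3) : Fin 3 → ℝ :=
  ![pd 1 (fun y => v y 2) x - pd 2 (fun y => v y 1) x,
    pd 2 (fun y => v y 0) x - pd 0 (fun y => v y 2) x,
    pd 0 (fun y => v y 1) x - pd 1 (fun y => v y 0) x]

/-- Squared norm of the full gradient of a vector field: |∇v|² = Σᵢⱼ (∂ᵢ vⱼ)². -/
def gradSq (v : E3 → E3) (x : E3) : ℝ := ∑ j, ∑ i, (pd i (fun y => v y j) x) ^ 2

/-- The open ball of radius `r` centered at the origin. -/
def ball3 (r : ℝ) : Set E3 := Metric.ball (0 : E3) r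

/-- `(u, w, b, Π)` is a smooth solution of the stationary magneto-micropolar equations on ℝ³
(with all physical constants set to 1):
−Δu + (u·∇)u + ∇Π = ∇×w + (b·∇)b; −Δw + (u·∇)w = ∇(div w) + ∇×u − 2w;
−Δb + (u·∇)b = (b·∇)u; div u = 0, div b = 0. -/
structure IsMMPSolution (u w b : E3 → E3) (P : E3 → ℝ) : Prop where
  smooth_u : ContDiff ℝ (⊤ : ℕ∞) u
  smooth_w : ContDiff ℝ (⊤ : ℕ∞) w
  smooth_b : ContDiff ℝ (⊤ : ℕ∞) b
  smooth_P : ContDiff ℝ (⊤ : ℕ∞) P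
  eq_u : ∀ x : E3, ∀ j : Fin 3,
    -(lap (fun y => u y j) x) + (∑ i, u x i * pd i (fun y => u y j) x) + pd j P x
      = curl3 w x j + ∑ i, b x i * pd i (fun y => b y j) x
  eq_w : ∀ x : E3, ∀ j : Fin 3,
    -(lap (fun y => w y j) x) + (∑ i, u x i * pd i (fun y => w y j) x)
      = pd j (fun y => vdiv w y) x + curl3 u x j - 2 * w x j
  eq_b : ∀ x : E3, ∀ j : Fin 3,
    -(lap (fun y => b y j) x) + (∑ i, u x i * pd i (fun y => b y j) x)
      = ∑ i, b x i * pd i (fun y => u y j) x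
  div_u : ∀ x : E3, vdiv u x = 0
  div_b : ∀ x : E3, vdiv b x = 0

/-- The `Lᵖ` norm of a vector field over a set `S` (for `p` a positive real). -/
def lpnorm (p : ℝ) (v : E3 → E3) (S : Set E3) : ℝ := (∫ x in S, ‖v x‖ ^ p) ^ (1 / p)

/-! Test the equations against `(V, φ w, φ b)`, where `φ` is a cutoff equal to `1` on `B_R` and
supported in `B_{2R}`, and `V` is a compactly supported divergence-free modification of `φ u`, so
that the pressure disappears. To build `V`, convolve `φ u` componentwise with a truncated Newton
kernel: this gives `Z` with compact support and `ΔZ = φ u + E` for a smoothing error `E`. With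
`q = div Z`, the field `V = ΔZ - ∇ div Z = φ u - W`, `W = ∇q - E`, is divergence free, and the
corrector `W` satisfies `∫ |∇W|² ≤ K R⁻² ∫_{B_{2R}} |u|²` because `div (φ u) = ∇φ · u`. In the
terms containing `ΔW = ∇Δq - ΔE`, the gradient `∇Δq` is invisible to the divergence-free fields
`u` and `b`.

The Lorentz terms `u · (b · ∇)b` and `b · (b · ∇)u` combine into a divergence, and the coupling
`w · (∇ × u)` is absorbed by completing a square. Only terms with derivatives of `φ` or with `W`
remain, hence the Caccioppoli inequality
`∫_{B_R} (|∇u|² + |∇b|² + |∇w|²) ≤ C (1 + M) R⁻¹ ∫_{B_{2R}} (|u|² + |b|² + |w|²)`.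
The estimate follows from `|v|² ≤ M^{1/2} |v|^{3/2}` and Jensen's inequality. -/

open scoped Convolution

/-- The gradient of a scalar function, as a vector field. The entries of its Jacobian matrix are
the second derivatives, so that `gradSq (grad f)` is the squared norm of the Hessian of `f`. -/
def grad (f : E3 → ℝ) (x : E3) : E3 := WithLp.toLp 2 fun j => pd j f x

/-- The derivative `(a·∇)f` of a scalar function along a vector field. -/
def advect (a : E3 → E3) (f : E3 → ℝ) (x : E3) : ℝ := ∑ i, a x i * pd i f x

/-! ### Calculus of partial derivatives -/

section Calculus

variable {f g : E3 → ℝ} {v : E3 → E3}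

@[simp]
lemma grad_apply (f : E3 → ℝ) (x : E3) (j : Fin 3) : grad f x j = pd j f x := rfl

lemma contDiff_of_coord (hv : ∀ j, ContDiff ℝ (⊤ : ℕ∞) fun x => v x j) :
    ContDiff ℝ (⊤ : ℕ∞) v :=
  contDiff_piLp 2 |>.2 hv

lemma differentiableAt_of_smooth (hf : ContDiff ℝ (⊤ : ℕ∞) f) (x : E3) :
    DifferentiableAt ℝ f x :=
  hf.differentiable (by simp) x

@[fun_prop]
lemma contDiff_pd (hf : ContDiff ℝ (⊤ : ℕ∞) f) (i : Fin 3) : ContDiff ℝ (⊤ : ℕ∞) (pd i f) :=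
  (hf.fderiv_right (m := (⊤ : ℕ∞)) (by simp)).clm_apply contDiff_const

@[fun_prop]
lemma contDiff_lap (hf : ContDiff ℝ (⊤ : ℕ∞) f) : ContDiff ℝ (⊤ : ℕ∞) (lap f) := by
  unfold lap
  fun_prop

@[fun_prop]
lemma contDiff_grad (hf : ContDiff ℝ (⊤ : ℕ∞) f) : ContDiff ℝ (⊤ : ℕ∞) (grad f) :=
  contDiff_of_coord fun j => contDiff_pd hf j

@[fun_prop]
lemma contDiff_vdiv (hv : ContDiff ℝ (⊤ : ℕ∞) v) : ContDiff ℝ (⊤ : ℕ∞) (vdiv v) := by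
  unfold vdiv
  fun_prop

@[fun_prop]
lemma contDiff_gradSq (hv : ContDiff ℝ (⊤ : ℕ∞) v) : ContDiff ℝ (⊤ : ℕ∞) (gradSq v) := by
  unfold gradSq
  fun_prop

lemma pd_add (hf : ContDiff ℝ (⊤ : ℕ∞) f) (hg : ContDiff ℝ (⊤ : ℕ∞) g) (i : Fin 3) (x : E3) :
    pd i (fun y => f y + g y) x = pd i f x + pd i g x := by
  rw [pd, fderiv_fun_add (differentiableAt_of_smooth hf x) (differentiableAt_of_smooth hg x)]
  rfl

lemma pd_sub (hf : ContDiff ℝ (⊤ : ℕ∞) f) (hg : ContDiff ℝ (⊤ : ℕ∞) g) (i : Fin 3) (x : E3) :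
    pd i (fun y => f y - g y) x = pd i f x - pd i g x := by
  rw [pd, fderiv_fun_sub (differentiableAt_of_smooth hf x) (differentiableAt_of_smooth hg x)]
  rfl

lemma pd_mul (hf : ContDiff ℝ (⊤ : ℕ∞) f) (hg : ContDiff ℝ (⊤ : ℕ∞) g) (i : Fin 3) (x : E3) :
    pd i (fun y => f y * g y) x = pd i f x * g x + f x * pd i g x := by
  rw [pd, fderiv_fun_mul (differentiableAt_of_smooth hf x) (differentiableAt_of_smooth hg x)]
  simp only [add_apply, smul_apply, smul_eq_mul, pd]
  ring

lemma pd_sum {ι : Type*} (s : Finset ι) {F : ι → E3 → ℝ} (hF : ∀ k, ContDiff ℝ (⊤ : ℕ∞) (F k))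
    (i : Fin 3) (x : E3) : pd i (fun y => ∑ k ∈ s, F k y) x = ∑ k ∈ s, pd i (F k) x := by
  rw [pd, fderiv_fun_sum fun k _ => differentiableAt_of_smooth (hF k) x]
  simp only [sum_apply, pd]

lemma pd_const_mul (c : ℝ) (f : E3 → ℝ) (i : Fin 3) (x : E3) :
    pd i (fun y => c * f y) x = c * pd i f x := by
  have h : fderiv ℝ (fun y => c • f y) x = c • fderiv ℝ f x := by
    exact congr_fun (fderiv_const_smul_field c) x
  simp only [pd, ← smul_eq_mul, h, smul_apply]

lemma pd_comp_smul (f : E3 → ℝ) (a : ℝ) (i : Fin 3) (x : E3) :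
    pd i (fun y => f (a • y)) x = a * pd i f (a • x) := by
  simp only [pd, fderiv_comp_smul, smul_apply, smul_eq_mul]

lemma pd_comm (hf : ContDiff ℝ (⊤ : ℕ∞) f) (i j : Fin 3) (x : E3) :
    pd i (pd j f) x = pd j (pd i f) x := by
  have pd_pd : ∀ k l, pd k (pd l f) x
      = fderiv ℝ (fderiv ℝ f) x (EuclideanSpace.single k 1) (EuclideanSpace.single l 1) :=
    fun k l => by
      have hd : DifferentiableAt ℝ (fderiv ℝ f) x :=
        (hf.fderiv_right (m := (⊤ : ℕ∞)) (by simp)).differentiable (by simp) x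
      have : pd l f = fun y => fderiv ℝ f y (EuclideanSpace.single l 1) := rfl
      rw [this, pd, fderiv_clm_apply hd (by fun_prop)]
      simp
  have two_le : minSmoothness ℝ 2 ≤ ((⊤ : ℕ∞) : WithTop ℕ∞) := by
    rw [minSmoothness_of_isRCLikeNormedField]
    exact WithTop.coe_le_coe.2 (le_top : (2 : ℕ∞) ≤ ⊤)
  rw [pd_pd, pd_pd]
  exact (hf.contDiffAt.isSymmSndFDerivAt two_le).eq _ _

lemma lap_eq_vdiv_grad (f : E3 → ℝ) (x : E3) : lap f x = vdiv (grad f) x := rfl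

lemma lap_sub (hf : ContDiff ℝ (⊤ : ℕ∞) f) (hg : ContDiff ℝ (⊤ : ℕ∞) g) (x : E3) :
    lap (fun y => f y - g y) x = lap f x - lap g x := by
  simp (disch := fun_prop) only [lap, pd_sub, Finset.sum_sub_distrib]

lemma lap_sum {ι : Type*} (s : Finset ι) {F : ι → E3 → ℝ}
    (hF : ∀ k, ContDiff ℝ (⊤ : ℕ∞) (F k)) (x : E3) :
    lap (fun y => ∑ k ∈ s, F k y) x = ∑ k ∈ s, lap (F k) x := by
  simp (disch := fun_prop) only [lap, pd_sum]
  exact Finset.sum_comm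

lemma lap_const_mul (c : ℝ) (f : E3 → ℝ) (x : E3) : lap (fun y => c * f y) x = c * lap f x := by
  simp only [lap, pd_const_mul, Finset.mul_sum]

lemma lap_comp_smul (f : E3 → ℝ) (a : ℝ) (x : E3) :
    lap (fun y => f (a • y)) x = a ^ 2 * lap f (a • x) := by
  have h i : pd i (fun y => pd i f (a • y)) x = a * pd i (pd i f) (a • x) := pd_comp_smul _ a i x
  simp only [lap, pd_comp_smul, pd_const_mul, h, Finset.mul_sum, ← mul_assoc, sq]

lemma lap_pd (hf : ContDiff ℝ (⊤ : ℕ∞) f) (i : Fin 3) (x : E3) :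
    lap (pd i f) x = pd i (lap f) x := by
  have : lap f = fun y => ∑ k, pd k (pd k f) y := rfl
  rw [this, pd_sum _ fun k => by fun_prop]
  refine Finset.sum_congr rfl fun k _ => ?_
  rw [funext (pd_comm hf k i), pd_comm (contDiff_pd hf k)]

lemma pd_vdiv (hv : ContDiff ℝ (⊤ : ℕ∞) v) (i : Fin 3) (x : E3) :
    pd i (vdiv v) x = ∑ k, pd k (pd i fun y => v y k) x := by
  have : vdiv v = fun y => ∑ k, pd k (fun z => v z k) y := rfl
  rw [this, pd_sum _ fun k => by fun_prop]
  exact Finset.sum_congr rfl fun k _ => pd_comm (by fun_prop) i k x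

lemma vdiv_sub {w : E3 → E3} (hv : ContDiff ℝ (⊤ : ℕ∞) v) (hw : ContDiff ℝ (⊤ : ℕ∞) w) (x : E3) :
    vdiv (fun y => v y - w y) x = vdiv v x - vdiv w x := by
  simp (disch := fun_prop) only [vdiv, PiLp.sub_apply, pd_sub, Finset.sum_sub_distrib]

lemma vdiv_smul (hf : ContDiff ℝ (⊤ : ℕ∞) f) (hv : ContDiff ℝ (⊤ : ℕ∞) v) (x : E3) :
    vdiv (fun y => f y • v y) x = f x * vdiv v x + advect v f x := by
  simp (disch := fun_prop) only [vdiv, advect, PiLp.smul_apply, smul_eq_mul, pd_mul,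
    Finset.mul_sum, ← Finset.sum_add_distrib]
  exact Finset.sum_congr rfl fun i _ => by ring

lemma pd_eq_zero_of_norm_gt {r : ℝ} (hf : ∀ x, r < ‖x‖ → f x = 0) (i : Fin 3) {x : E3}
    (hx : r < ‖x‖) : pd i f x = 0 := by
  have : f =ᶠ[𝓝 x] fun _ => 0 := by
    filter_upwards [(isOpen_lt continuous_const continuous_norm).mem_nhds hx] with y hy
    exact hf y hy
  rw [pd, this.fderiv_eq]
  simp

end Calculus

/-! ### Test functions and integration by parts -/

/-- Smooth functions supported in the closed ball of radius `r` around the origin. -/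
structure IsTestFunction {F : Type*} [NormedAddCommGroup F] [NormedSpace ℝ F] (r : ℝ)
    (f : E3 → F) : Prop where
  smooth : ContDiff ℝ (⊤ : ℕ∞) f
  eq_zero : ∀ x, r < ‖x‖ → f x = 0

namespace IsTestFunction

section NormedSpace

variable {F : Type*} [NormedAddCommGroup F] [NormedSpace ℝ F] {r r' : ℝ} {f g : E3 → F}

lemma mono (hf : IsTestFunction r f) (h : r ≤ r') : IsTestFunction r' f :=
  ⟨hf.smooth, fun x hx => hf.eq_zero x (h.trans_lt hx)⟩

lemma add (hf : IsTestFunction r f) (hg : IsTestFunction r g) :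
    IsTestFunction r fun x => f x + g x :=
  ⟨hf.smooth.add hg.smooth, fun x hx => by rw [hf.eq_zero x hx, hg.eq_zero x hx, add_zero]⟩

lemma sub (hf : IsTestFunction r f) (hg : IsTestFunction r g) :
    IsTestFunction r fun x => f x - g x :=
  ⟨hf.smooth.sub hg.smooth, fun x hx => by rw [hf.eq_zero x hx, hg.eq_zero x hx, sub_zero]⟩

lemma smul {φ : E3 → ℝ} (hφ : IsTestFunction r φ) (hf : ContDiff ℝ (⊤ : ℕ∞) f) :
    IsTestFunction r fun x => φ x • f x :=
  ⟨hφ.smooth.smul hf, fun x hx => by rw [hφ.eq_zero x hx, zero_smul]⟩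

lemma const_smul (hf : IsTestFunction r f) (c : ℝ) : IsTestFunction r fun x => c • f x :=
  ⟨contDiff_const.smul hf.smooth, fun x hx => by rw [hf.eq_zero x hx, smul_zero]⟩

lemma sum {ι : Type*} (s : Finset ι) {G : ι → E3 → F} (hG : ∀ k, IsTestFunction r (G k)) :
    IsTestFunction r fun x => ∑ k ∈ s, G k x :=
  ⟨ContDiff.sum fun k _ => (hG k).smooth,
    fun x hx => Finset.sum_eq_zero fun k _ => (hG k).eq_zero x hx⟩

lemma comp_smul (hf : IsTestFunction r f) {a : ℝ} (ha : 0 < a) :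
    IsTestFunction (r / a) fun x => f (a • x) :=
  ⟨hf.smooth.comp (contDiff_const_smul a), fun x hx => hf.eq_zero _ <| by
    rwa [norm_smul, Real.norm_of_nonneg ha.le, ← div_lt_iff₀' ha]⟩

lemma hasCompactSupport (hf : IsTestFunction r f) : HasCompactSupport f :=
  .intro (isCompact_closedBall (0 : E3) r) fun x hx => hf.eq_zero x (by simpa using hx)

lemma integrable (hf : IsTestFunction r f) : Integrable f :=
  hf.smooth.continuous.integrable_of_hasCompactSupport hf.hasCompactSupport

lemma eq_zero_of_notMem_ball3 (hf : IsTestFunction r f) (h : r < r') {x : E3}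
    (hx : x ∉ ball3 r') : f x = 0 :=
  hf.eq_zero x (h.trans_le (by simpa [ball3] using hx))

lemma exists_norm_le (hf : IsTestFunction r f) : ∃ C, 0 ≤ C ∧ ∀ x, ‖f x‖ ≤ C := by
  obtain ⟨C, hC⟩ := hf.hasCompactSupport.exists_bound_of_continuous hf.smooth.continuous
  exact ⟨C, (norm_nonneg _).trans (hC 0), hC⟩

end NormedSpace

variable {r : ℝ} {f g : E3 → ℝ} {v : E3 → E3}

lemma mul (hf : IsTestFunction r f) (hg : ContDiff ℝ (⊤ : ℕ∞) g) :
    IsTestFunction r fun x => f x * g x :=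
  hf.smul hg

protected lemma pd (hf : IsTestFunction r f) (i : Fin 3) : IsTestFunction r (pd i f) :=
  ⟨contDiff_pd hf.smooth i, fun _ hx => pd_eq_zero_of_norm_gt hf.eq_zero i hx⟩

protected lemma lap (hf : IsTestFunction r f) : IsTestFunction r (lap f) :=
  sum _ fun i => (hf.pd i).pd i

lemma coord (hv : IsTestFunction r v) (j : Fin 3) : IsTestFunction r fun x => v x j :=
  ⟨contDiff_piLp 2 |>.1 hv.smooth j, fun x hx => by rw [hv.eq_zero x hx, PiLp.zero_apply]⟩

lemma of_coord (hv : ∀ j, IsTestFunction r fun x => v x j) : IsTestFunction r v :=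
  ⟨contDiff_of_coord fun j => (hv j).smooth, fun x hx => PiLp.ext fun j => (hv j).eq_zero x hx⟩

protected lemma grad (hf : IsTestFunction r f) : IsTestFunction r (grad f) :=
  of_coord fun j => hf.pd j

protected lemma vdiv (hv : IsTestFunction r v) : IsTestFunction r (vdiv v) :=
  sum _ fun i => (hv.coord i).pd i

protected lemma gradSq (hv : IsTestFunction r v) : IsTestFunction r (gradSq v) :=
  sum _ fun j => sum _ fun i => by
    simpa only [sq] using ((hv.coord j).pd i).mul (contDiff_pd (hv.coord j).smooth i)

lemma integral_pd_eq_zero (hf : IsTestFunction r f) (i : Fin 3) : ∫ x, pd i f x = 0 := by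
  have hint : Integrable fun x => fderiv ℝ f x (EuclideanSpace.single i 1) := (hf.pd i).integrable
  simpa [pd] using integral_mul_fderiv_eq_neg_fderiv_mul_of_integrable
    (f := fun _ : E3 => (1 : ℝ)) (g := f) (v := EuclideanSpace.single i 1) (μ := volume)
    (by simp) (by simpa using hint) (by simpa using hf.integrable)
    (fun x _ => by fun_prop) (fun x _ => differentiableAt_of_smooth hf.smooth x)

end IsTestFunction

/-- Test functions of integral zero. Each integration by parts below is recorded as the fact
that some combination of integrands is one. -/
structure IsNullTestFunction (r : ℝ) (f : E3 → ℝ) : Prop extends IsTestFunction r f where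
  integral_eq_zero : ∫ x, f x = 0

namespace IsNullTestFunction

variable {r : ℝ} {f g : E3 → ℝ}

lemma add (hf : IsNullTestFunction r f) (hg : IsNullTestFunction r g) :
    IsNullTestFunction r fun x => f x + g x :=
  ⟨hf.toIsTestFunction.add hg.toIsTestFunction, by
    rw [integral_add hf.integrable hg.integrable, hf.integral_eq_zero, hg.integral_eq_zero,
      add_zero]⟩

lemma sub (hf : IsNullTestFunction r f) (hg : IsNullTestFunction r g) :
    IsNullTestFunction r fun x => f x - g x :=
  ⟨hf.toIsTestFunction.sub hg.toIsTestFunction, by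
    rw [integral_sub hf.integrable hg.integrable, hf.integral_eq_zero, hg.integral_eq_zero,
      sub_zero]⟩

lemma const_mul (hf : IsNullTestFunction r f) (c : ℝ) : IsNullTestFunction r fun x => c * f x :=
  ⟨hf.toIsTestFunction.const_smul c, by rw [integral_const_mul, hf.integral_eq_zero, mul_zero]⟩

lemma sum {ι : Type*} (s : Finset ι) {G : ι → E3 → ℝ} (hG : ∀ k, IsNullTestFunction r (G k)) :
    IsNullTestFunction r fun x => ∑ k ∈ s, G k x :=
  ⟨.sum s fun k => (hG k).toIsTestFunction, by
    rw [integral_finsetSum _ fun k _ => (hG k).integrable]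
    exact Finset.sum_eq_zero fun k _ => (hG k).integral_eq_zero⟩

lemma congr (hf : IsNullTestFunction r f) (h : ∀ x, f x = g x) : IsNullTestFunction r g :=
  (funext h : f = g) ▸ hf

end IsNullTestFunction

namespace IsTestFunction

variable {r : ℝ} {f φ q : E3 → ℝ} {a u v w V : E3 → E3}

lemma null_pd (hf : IsTestFunction r f) (i : Fin 3) : IsNullTestFunction r (pd i f) :=
  ⟨hf.pd i, hf.integral_pd_eq_zero i⟩

lemma null_vdiv (hV : IsTestFunction r V) : IsNullTestFunction r (vdiv V) :=
  .sum _ fun i => (hV.coord i).null_pd i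

lemma null_mul_lap_sub (hφ : IsTestFunction r φ) (hf : ContDiff ℝ (⊤ : ℕ∞) f) :
    IsNullTestFunction r fun x => φ x * lap f x - lap φ x * f x := by
  refine (IsNullTestFunction.sum Finset.univ fun i =>
    ((hφ.mul (contDiff_pd hf i)).sub ((hφ.pd i).mul hf)).null_pd i).congr fun x => ?_
  have hs := hφ.smooth
  simp (disch := fun_prop) only [pd_sub, pd_mul, lap, Fin.sum_univ_three]
  ring

lemma null_energy (hφ : IsTestFunction r φ) (hv : ContDiff ℝ (⊤ : ℕ∞) v) :
    IsNullTestFunction r fun x => φ x * ∑ j, v x j * lap (fun y => v y j) x + φ x * gradSq v x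
      - 1 / 2 * lap φ x * ‖v x‖ ^ 2 := by
  have hs := hφ.smooth
  have energy_coord j := ((IsNullTestFunction.sum Finset.univ fun i =>
    (hφ.mul (g := fun x => v x j * pd i (fun y => v y j) x) (by fun_prop)).null_pd i).sub
    ((IsNullTestFunction.sum Finset.univ fun i =>
      ((hφ.pd i).mul (g := fun x => v x j * v x j) (by fun_prop)).null_pd i).const_mul (1 / 2)))
  refine (IsNullTestFunction.sum Finset.univ energy_coord).congr fun x => ?_
  simp (disch := fun_prop) only [pd_mul, lap, gradSq, EuclideanSpace.real_norm_sq_eq,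
    Fin.sum_univ_three]
  ring

lemma null_advect (hφ : IsTestFunction r φ) (ha : ContDiff ℝ (⊤ : ℕ∞) a)
    (hdiv : ∀ x, vdiv a x = 0) : IsNullTestFunction r (advect a φ) :=
  (hφ.smul ha).null_vdiv.congr fun x => by rw [vdiv_smul hφ.smooth ha, hdiv, mul_zero, zero_add]

lemma null_advect_of_vdiv_eq_zero (hV : IsTestFunction r V) (hdiv : ∀ x, vdiv V x = 0)
    (hf : ContDiff ℝ (⊤ : ℕ∞) f) : IsNullTestFunction r (advect V f) := by
  have htest : IsTestFunction r fun x => f x • V x :=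
    ⟨hf.smul hV.smooth, fun x hx => by rw [hV.eq_zero x hx, smul_zero]⟩
  exact htest.null_vdiv.congr fun x => by rw [vdiv_smul hf hV.smooth, hdiv, mul_zero, zero_add]

lemma null_advect_inner (hV : IsTestFunction r V) (ha : ContDiff ℝ (⊤ : ℕ∞) a)
    (hdiv : ∀ x, vdiv a x = 0) (hv : ContDiff ℝ (⊤ : ℕ∞) v) :
    IsNullTestFunction r fun x => ∑ j, V x j * advect a (fun y => v y j) x
      + ∑ j, v x j * advect a (fun y => V y j) x := by
  have hs := hV.smooth
  refine (IsNullTestFunction.sum Finset.univ fun j => ((hV.coord j).mul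
    (g := fun x => v x j) (by fun_prop)).null_advect ha hdiv).congr fun x => ?_
  simp (disch := fun_prop) only [advect, pd_mul, Fin.sum_univ_three]
  ring

lemma null_advect_smul_inner (hφ : IsTestFunction r φ) (ha : ContDiff ℝ (⊤ : ℕ∞) a)
    (hdiv : ∀ x, vdiv a x = 0) (hv : ContDiff ℝ (⊤ : ℕ∞) v) (hw : ContDiff ℝ (⊤ : ℕ∞) w) :
    IsNullTestFunction r fun x => φ x * ∑ j, v x j * advect a (fun y => w y j) x
      + φ x * ∑ j, w x j * advect a (fun y => v y j) x + advect a φ x * ∑ j, v x j * w x j := by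
  have hs := hφ.smooth
  refine ((hφ.smul hv).null_advect_inner ha hdiv hw).congr fun x => ?_
  simp (disch := fun_prop) only [PiLp.smul_apply, smul_eq_mul, advect, pd_mul, Fin.sum_univ_three]
  ring

lemma null_curl3_inner (hV : IsTestFunction r V) (hw : ContDiff ℝ (⊤ : ℕ∞) w) :
    IsNullTestFunction r fun x => ∑ j, V x j * curl3 w x j - ∑ j, w x j * curl3 V x j := by
  have hs := hV.smooth
  have null k i j := ((hV.coord i).mul (g := fun x => w x j) (by fun_prop)).null_pd k
  refine ((((null 1 0 2).sub (null 1 2 0)).add ((null 2 1 0).sub (null 2 0 1))).add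
    ((null 0 2 1).sub (null 0 1 2))).congr fun x => ?_
  simp (disch := fun_prop) only [pd_mul, curl3, Fin.sum_univ_three, Matrix.cons_val]
  ring

lemma null_grad_vdiv (hφ : IsTestFunction r φ) (hw : ContDiff ℝ (⊤ : ℕ∞) w) :
    IsNullTestFunction r fun x => φ x * ∑ j, w x j * pd j (vdiv w) x
      + (φ x * vdiv w x ^ 2 + vdiv w x * advect w φ x) := by
  have hs := hφ.smooth
  refine ((hφ.mul (contDiff_vdiv hw)).smul hw).null_vdiv.congr fun x => ?_
  rw [vdiv_smul (by fun_prop) hw]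
  simp (disch := fun_prop) only [advect, pd_mul, Fin.sum_univ_three]
  ring

lemma null_curl3_sq (hφ : IsTestFunction r φ) (hu : ContDiff ℝ (⊤ : ℕ∞) u)
    (hdiv : ∀ x, vdiv u x = 0) :
    IsNullTestFunction r fun x => φ x * ∑ j, curl3 u x j ^ 2 - φ x * gradSq u x
      + ∑ i, ∑ j, u x i * u x j * pd i (pd j φ) x := by
  have hs := hφ.smooth
  have swap := IsNullTestFunction.sum Finset.univ fun i => IsNullTestFunction.sum Finset.univ
    fun j => (hφ.mul (g := fun x => u x j * pd j (fun y => u y i) x) (by fun_prop)).null_pd i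
  have flux := IsNullTestFunction.sum Finset.univ fun i => IsNullTestFunction.sum Finset.univ
    fun j => ((hφ.pd j).mul (g := fun x => u x j * u x i) (by fun_prop)).null_pd i
  refine (flux.sub swap).congr fun x => ?_
  have div_pd j : ∑ k, pd k (pd j fun z => u z k) x = 0 := by
    rw [← pd_vdiv hu, funext hdiv]
    simp [pd]
  have div := hdiv x
  have d0 := div_pd 0
  have d1 := div_pd 1
  have d2 := div_pd 2
  simp (disch := fun_prop) only [vdiv, pd_mul, Fin.sum_univ_three, curl3, gradSq,
    Matrix.cons_val] at div d0 d1 d2 ⊢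
  linear_combination (u x 0 * pd 0 φ x + u x 1 * pd 1 φ x + u x 2 * pd 2 φ x) * div
    - φ x * (u x 0 * d0 + u x 1 * d1 + u x 2 * d2)

lemma null_hessian (hq : IsTestFunction r q) :
    IsNullTestFunction r fun x => gradSq (grad q) x - lap q x ^ 2 := by
  have hs := hq.smooth
  have hessian := IsNullTestFunction.sum Finset.univ fun i => IsNullTestFunction.sum Finset.univ
    fun j => ((hq.pd j).mul (contDiff_pd (contDiff_pd hs j) i)).null_pd i
  have trace := IsNullTestFunction.sum Finset.univ
    fun j => ((hq.pd j).mul (contDiff_lap hs)).null_pd j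
  refine (hessian.sub trace).congr fun x => ?_
  simp (disch := fun_prop) only [pd_mul, ← lap_pd, gradSq, grad_apply]
  simp only [lap, Fin.sum_univ_three]
  ring

end IsTestFunction

/-! ### The truncated Newton kernel -/

/-- The Laplacian of `x ↦ F (‖x‖ ^ 2)` as a function of the radius. -/
def radialLap (F : ℝ → ℝ) (r : ℝ) : ℝ := 6 * deriv F (r ^ 2) + 4 * r ^ 2 * deriv (deriv F) (r ^ 2)

section Radial

variable {F : ℝ → ℝ}

lemma hasDerivAt_comp_sq (hF : ContDiff ℝ (⊤ : ℕ∞) F) (r : ℝ) :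
    HasDerivAt (fun s => F (s ^ 2)) (2 * r * deriv F (r ^ 2)) r := by
  have hF' : HasDerivAt F (deriv F (r ^ 2)) (r ^ 2) := (hF.differentiable (by simp) _).hasDerivAt
  refine (HasDerivAt.comp (h := fun s : ℝ => s ^ 2) r hF' (hasDerivAt_pow 2 r)).congr_deriv ?_
  push_cast
  ring

lemma hasDerivAt_radial_flux (hF : ContDiff ℝ (⊤ : ℕ∞) F) (r : ℝ) :
    HasDerivAt (fun r => 2 * r ^ 3 * deriv F (r ^ 2)) (r ^ 2 * radialLap F r) r := by
  have hF' : ContDiff ℝ (⊤ : ℕ∞) (deriv F) := (contDiff_infty_iff_deriv.1 hF).2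
  refine (((hasDerivAt_pow 3 r).const_mul 2).mul (hasDerivAt_comp_sq hF' r)).congr_deriv ?_
  simp only [radialLap, Nat.cast_ofNat, Nat.add_one_sub_one]
  ring

lemma pd_coord (i j : Fin 3) (x : E3) : pd i (fun y => y j) x = if i = j then 1 else 0 := by
  have : HasFDerivAt (fun y : E3 => y j) (EuclideanSpace.proj j : E3 →L[ℝ] ℝ) x :=
    (EuclideanSpace.proj j : E3 →L[ℝ] ℝ).hasFDerivAt
  rw [pd, this.fderiv]
  simp [eq_comm]

lemma pd_comp_norm_sq (hF : ContDiff ℝ (⊤ : ℕ∞) F) (i : Fin 3) (x : E3) :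
    pd i (fun y => F (‖y‖ ^ 2)) x = 2 * (x i * deriv F (‖x‖ ^ 2)) := by
  have hnorm : HasFDerivAt (fun y : E3 => ‖y‖ ^ 2) (2 • (innerSL ℝ x)) x :=
    (hasStrictFDerivAt_norm_sq x).hasFDerivAt
  have hF' : HasDerivAt F (deriv F (‖x‖ ^ 2)) (‖x‖ ^ 2) :=
    (hF.differentiable (by simp) _).hasDerivAt
  have hcomp := (hF'.comp_hasFDerivAt x hnorm).fderiv
  rw [Function.comp_def] at hcomp
  rw [pd, hcomp]
  simp [EuclideanSpace.inner_single_right]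
  ring

lemma lap_comp_norm_sq (hF : ContDiff ℝ (⊤ : ℕ∞) F) (x : E3) :
    lap (fun y => F (‖y‖ ^ 2)) x = radialLap F ‖x‖ := by
  have hF' : ContDiff ℝ (⊤ : ℕ∞) (deriv F) := (contDiff_infty_iff_deriv.1 hF).2
  have hcomp : ContDiff ℝ (⊤ : ℕ∞) fun y : E3 => deriv F (‖y‖ ^ 2) :=
    hF'.comp (contDiff_norm_sq ℝ)
  simp (disch := fun_prop) only [lap, radialLap, pd_comp_norm_sq hF, pd_const_mul, pd_mul,
    pd_coord, pd_comp_norm_sq hF', if_true]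
  rw [Fin.sum_univ_three]
  linear_combination
    (-4 * deriv (deriv F) (‖x‖ ^ 2)) * (EuclideanSpace.real_norm_sq_eq x).trans
      (Fin.sum_univ_three _)

end Radial

/-- A smooth function on the line which agrees with `t ↦ t ^ (-1/2)` for `t ≥ 1` and vanishes for
`t ≤ 1/2`. -/
def newtonProfile (t : ℝ) : ℝ := smoothTransition (2 * t - 1) * (√t)⁻¹

/-- A smooth function agreeing with the Newton kernel `‖x‖⁻¹` (`4π` times the fundamental solution
of `-Δ`) outside the unit ball. -/
def smoothNewton (x : E3) : ℝ := newtonProfile (‖x‖ ^ 2)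

/-- The Newton kernel `‖x‖⁻¹` with its smooth part removed: it keeps the singularity at the origin
and vanishes outside the unit ball. -/
def truncatedNewton (x : E3) : ℝ := ‖x‖⁻¹ - smoothNewton x

lemma contDiff_newtonProfile : ContDiff ℝ (⊤ : ℕ∞) newtonProfile := by
  rw [contDiff_iff_contDiffAt]
  intro t
  rcases lt_or_ge t (1 / 2) with ht | ht
  · have : newtonProfile =ᶠ[𝓝 t] fun _ => 0 := by
      filter_upwards [Iio_mem_nhds ht] with s hs
      have hs : s < 1 / 2 := hs
      rw [newtonProfile, smoothTransition.zero_of_nonpos (by linarith), zero_mul]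
    exact contDiffAt_const.congr_of_eventuallyEq this
  · have ht0 : 0 < t := by linarith
    exact (smoothTransition.contDiff.contDiffAt.comp t (by fun_prop)).mul
      ((contDiffAt_id.sqrt ht0.ne').inv (Real.sqrt_ne_zero'.2 ht0))

lemma newtonProfile_sq {r : ℝ} (hr : 1 ≤ r) : newtonProfile (r ^ 2) = r⁻¹ := by
  rw [newtonProfile, smoothTransition.one_of_one_le (by nlinarith), Real.sqrt_sq (by linarith),
    one_mul]

lemma contDiff_smoothNewton : ContDiff ℝ (⊤ : ℕ∞) smoothNewton :=
  contDiff_newtonProfile.comp (contDiff_norm_sq ℝ)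

lemma truncatedNewton_eq_zero {x : E3} (hx : 1 < ‖x‖) : truncatedNewton x = 0 := by
  rw [truncatedNewton, smoothNewton, newtonProfile_sq hx.le, sub_self]

lemma finrank_E3 : Module.finrank ℝ E3 = 3 := by simp

lemma integrable_truncatedNewton : Integrable truncatedNewton := by
  refine (integrable_fun_norm_addHaar volume (f := fun r => r⁻¹ - newtonProfile (r ^ 2))).2 ?_
  have near : IntegrableOn (fun y : ℝ => y - y ^ 2 * newtonProfile (y ^ 2)) (Set.Ioc 0 1) := by
    have := contDiff_newtonProfile.continuous
    exact (Continuous.integrableOn_Icc (by fun_prop)).mono_set Set.Ioc_subset_Icc_self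
  rw [finrank_E3, ← Set.Ioc_union_Ioi_eq_Ioi (zero_le_one : (0 : ℝ) ≤ 1)]
  refine IntegrableOn.union (near.congr_fun (fun y hy => ?_) measurableSet_Ioc)
    (integrableOn_zero.congr_fun (fun y hy => ?_) measurableSet_Ioi)
  · have : y ≠ 0 := hy.1.ne'
    simp only [smul_eq_mul, Nat.add_one_sub_one]
    field_simp
  · simp [newtonProfile_sq (le_of_lt (Set.mem_Ioi.1 hy))]

lemma radial_flux_newtonProfile {r : ℝ} (hr : 1 < r) :
    2 * r ^ 3 * deriv newtonProfile (r ^ 2) = -1 := by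
  have hinv : HasDerivAt (fun s => newtonProfile (s ^ 2)) (-(r ^ 2)⁻¹) r := by
    refine (hasDerivAt_inv (by linarith)).congr_of_eventuallyEq ?_
    filter_upwards [Ioi_mem_nhds hr] with s hs
    exact newtonProfile_sq (le_of_lt hs)
  have hderiv := (hasDerivAt_comp_sq contDiff_newtonProfile r).unique hinv
  have hr0 : r ≠ 0 := by linarith
  calc 2 * r ^ 3 * deriv newtonProfile (r ^ 2)
      = r ^ 2 * (2 * r * deriv newtonProfile (r ^ 2)) := by ring
    _ = -1 := by rw [hderiv]; field_simp

lemma radialLap_newtonProfile_eq_zero {r : ℝ} (hr : 1 < r) : radialLap newtonProfile r = 0 := by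
  have hconst : HasDerivAt (fun r => 2 * r ^ 3 * deriv newtonProfile (r ^ 2)) 0 r := by
    refine (hasDerivAt_const r (-1 : ℝ)).congr_of_eventuallyEq ?_
    filter_upwards [Ioi_mem_nhds hr] with s hs
    exact radial_flux_newtonProfile hs
  have hr0 : r ≠ 0 := by linarith
  simpa [hr0] using (hasDerivAt_radial_flux contDiff_newtonProfile r).unique hconst

lemma lap_smoothNewton (x : E3) : lap smoothNewton x = radialLap newtonProfile ‖x‖ :=
  lap_comp_norm_sq contDiff_newtonProfile x

lemma isTestFunction_lap_smoothNewton : IsTestFunction 1 (lap smoothNewton) :=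
  ⟨contDiff_lap contDiff_smoothNewton, fun x hx => by
    rw [lap_smoothNewton, radialLap_newtonProfile_eq_zero hx]⟩

lemma integral_lap_smoothNewton_ne_zero : ∫ x, lap smoothNewton x ≠ 0 := by
  have hint := isTestFunction_lap_smoothNewton.integrable
  rw [funext lap_smoothNewton, integrable_fun_norm_addHaar, finrank_E3] at hint
  have hflux : Tendsto (fun r => 2 * r ^ 3 * deriv newtonProfile (r ^ 2)) atTop (𝓝 (-1)) := by
    refine tendsto_const_nhds.congr' ?_
    filter_upwards [eventually_gt_atTop 1] with r hr
    exact (radial_flux_newtonProfile hr).symm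
  have hradial : ∫ r in Set.Ioi (0 : ℝ), r ^ (3 - 1) • radialLap newtonProfile r = -1 := by
    refine (integral_Ioi_of_hasDerivAt_of_tendsto'
      (fun r _ => hasDerivAt_radial_flux contDiff_newtonProfile r) hint hflux).trans ?_
    simp
  have hball : 0 < (volume : Measure E3).real (ball 0 1) :=
    ENNReal.toReal_pos (measure_ball_pos _ _ one_pos).ne' measure_ball_lt_top.ne
  rw [funext lap_smoothNewton, integral_fun_norm_addHaar, finrank_E3, hradial]
  simp [hball.ne']

lemma integral_comp_smul_E3 {F : Type*} [NormedAddCommGroup F] [NormedSpace ℝ F] (f : E3 → F)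
    {a : ℝ} (ha : 0 < a) : a ^ 3 • ∫ x, f (a • x) = ∫ x, f x := by
  rw [Measure.integral_comp_smul_of_nonneg volume f a (hR := ha.le), finrank_E3,
    smul_inv_smul₀ (by positivity)]

lemma tendsto_integral_mul_dilate {g h : E3 → ℝ} {C : ℝ} (hg : Integrable g) (hh : Continuous h)
    (hC : ∀ x, ‖h x‖ ≤ C) :
    Tendsto (fun e : ℝ => ∫ y, g y * h (e • y)) (𝓝[>] 0) (𝓝 ((∫ y, g y) * h 0)) := by
  rw [← integral_mul_const]
  refine tendsto_integral_filter_of_dominated_convergence (fun y => ‖g y‖ * C) ?_ ?_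
    (hg.norm.mul_const C) ?_
  · exact .of_forall fun e => hg.aestronglyMeasurable.mul
      (hh.comp (continuous_const_smul e)).aestronglyMeasurable
  · exact .of_forall fun e => .of_forall fun y => by
      rw [norm_mul]
      exact mul_le_mul_of_nonneg_left (hC _) (norm_nonneg _)
  · refine .of_forall fun y => ?_
    have : Continuous fun e : ℝ => g y * h (e • y) := by fun_prop
    simpa using (this.tendsto 0).mono_left nhdsWithin_le_nhds

lemma IsTestFunction.integral_mul_lap {r : ℝ} {f h : E3 → ℝ} (hh : IsTestFunction r h)
    (hf : ContDiff ℝ (⊤ : ℕ∞) f) : ∫ x, f x * lap h x = ∫ x, lap f x * h x := by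
  have hnull := (hh.null_mul_lap_sub hf).integral_eq_zero
  rw [integral_sub (hh.mul (contDiff_lap hf)).integrable (hh.lap.mul hf).integrable,
    sub_eq_zero] at hnull
  simpa only [mul_comm] using hnull.symm

lemma truncatedNewton_dilate {e : ℝ} (he : 0 < e) (y : E3) :
    truncatedNewton y = e⁻¹ * truncatedNewton (e⁻¹ • y)
      + (e⁻¹ * smoothNewton (e⁻¹ • y) - smoothNewton y) := by
  simp only [truncatedNewton, norm_smul, norm_inv, Real.norm_of_nonneg he.le, mul_inv, inv_inv]
  field_simp
  ring

lemma integral_dilate_sub_smoothNewton_mul_lap {r e : ℝ} {h : E3 → ℝ} (hh : IsTestFunction r h)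
    (he : 0 < e) : ∫ y, (e⁻¹ * smoothNewton (e⁻¹ • y) - smoothNewton y) * lap h y
      = (∫ y, lap smoothNewton y * h (e • y)) - ∫ y, lap smoothNewton y * h y := by
  have hN := contDiff_smoothNewton
  have hNe : ContDiff ℝ (⊤ : ℕ∞) fun y => e⁻¹ * smoothNewton (e⁻¹ • y) :=
    contDiff_const.mul (hN.comp (contDiff_const_smul _))
  have hlap y : lap (fun y => e⁻¹ * smoothNewton (e⁻¹ • y)) y
      = (e ^ 3)⁻¹ * lap smoothNewton (e⁻¹ • y) := by
    rw [lap_const_mul, lap_comp_smul]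
    field_simp
  have hint := (hh.mul (contDiff_lap hNe)).integrable
  have hdil := integral_comp_smul_E3 (fun y => (e ^ 3)⁻¹ * lap smoothNewton (e⁻¹ • y) * h y) he
  simp only [hlap, mul_comm (h _)] at hint
  rw [hh.integral_mul_lap (hNe.sub hN)]
  simp_rw [lap_sub hNe hN, hlap, sub_mul]
  rw [integral_sub hint (by simpa only [mul_comm] using (hh.mul (contDiff_lap hN)).integrable),
    ← hdil, ← integral_smul]
  simp only [smul_smul, inv_mul_cancel₀ he.ne', one_smul, smul_eq_mul, mul_assoc]
  simp only [mul_inv_cancel_left₀ (pow_ne_zero 3 he.ne')]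

lemma integral_truncatedNewton_mul_lap_dilate {r e : ℝ} {h : E3 → ℝ} (hh : IsTestFunction r h)
    (he : 0 < e) : ∫ y, truncatedNewton y * lap h y
      = e ^ 2 * (∫ y, truncatedNewton y * lap h (e • y))
        + ((∫ y, lap smoothNewton y * h (e • y)) - ∫ y, lap smoothNewton y * h y) := by
  obtain ⟨C, -, hC⟩ := hh.lap.exists_norm_le
  have hint : Integrable fun y => e⁻¹ * (truncatedNewton (e⁻¹ • y) * lap h y) :=
    ((integrable_truncatedNewton.comp_smul (inv_ne_zero he.ne')).mul_bdd
      hh.lap.smooth.continuous.aestronglyMeasurable (.of_forall hC)).const_mul _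
  have hint' : Integrable fun y =>
      (e⁻¹ * smoothNewton (e⁻¹ • y) - smoothNewton y) * lap h y := by
    have hN := contDiff_smoothNewton
    simpa only [mul_comm] using (hh.lap.mul
      (g := fun y => e⁻¹ * smoothNewton (e⁻¹ • y) - smoothNewton y) (by fun_prop)).integrable
  have hdil : ∫ y, e⁻¹ * (truncatedNewton (e⁻¹ • y) * lap h y)
      = e ^ 2 * ∫ y, truncatedNewton y * lap h (e • y) := by
    rw [integral_const_mul, ← integral_comp_smul_E3 _ he]
    simp only [inv_smul_smul₀ he.ne', smul_eq_mul]
    field_simp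
  rw [← hdil, ← integral_dilate_sub_smoothNewton_mul_lap hh he, ← integral_add hint hint']
  refine integral_congr_ae (.of_forall fun y => ?_)
  simp only [truncatedNewton_dilate he y]
  ring

lemma integral_truncatedNewton_mul_lap {r : ℝ} {h : E3 → ℝ} (hh : IsTestFunction r h) :
    ∫ y, truncatedNewton y * lap h y
      = (∫ y, lap smoothNewton y) * h 0 - ∫ y, lap smoothNewton y * h y := by
  obtain ⟨C, -, hC⟩ := hh.exists_norm_le
  obtain ⟨C', -, hC'⟩ := hh.lap.exists_norm_le
  have hsq : Tendsto (fun e : ℝ => e ^ 2) (𝓝[>] 0) (𝓝 0) := by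
    simpa using ((continuous_pow 2).tendsto (0 : ℝ)).mono_left nhdsWithin_le_nhds
  have hlim := (hsq.mul (tendsto_integral_mul_dilate integrable_truncatedNewton
    hh.lap.smooth.continuous hC')).add ((tendsto_integral_mul_dilate
      isTestFunction_lap_smoothNewton.integrable hh.smooth.continuous hC).sub_const
        (∫ y, lap smoothNewton y * h y))
  rw [zero_mul, zero_add] at hlim
  refine tendsto_nhds_unique (tendsto_const_nhds.congr' ?_) hlim
  filter_upwards [self_mem_nhdsWithin] with e he
  exact integral_truncatedNewton_mul_lap_dilate hh he

/-! ### A compactly supported parametrix of the Laplacian -/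

section Convolution

variable {k Y : E3 → ℝ} {r s : ℝ}

lemma convolution_comm_E3 (f g : E3 → ℝ) : f ⋆ g = g ⋆ f := by
  ext x
  rw [convolution_lsmul, convolution_lsmul_swap]
  simp only [smul_eq_mul, mul_comm]

lemma contDiff_convolution (hk : Integrable k) (hY : IsTestFunction r Y) :
    ContDiff ℝ (⊤ : ℕ∞) (k ⋆ Y) :=
  hY.hasCompactSupport.contDiff_convolution_right _ hk.locallyIntegrable hY.smooth

lemma pd_convolution (hk : Integrable k) (hY : IsTestFunction r Y) (i : Fin 3) :
    pd i (k ⋆ Y) = k ⋆ pd i Y := by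
  ext x
  rw [pd, (hY.hasCompactSupport.hasFDerivAt_convolution_right _ hk.locallyIntegrable
      (hY.smooth.of_le (by exact_mod_cast le_top)) x).fderiv,
    convolution_precompR_apply _ hk.locallyIntegrable (hY.hasCompactSupport.fderiv ℝ)
      (hY.smooth.continuous_fderiv (by simp))]
  rfl

lemma pd_convolution_left (hk : IsTestFunction s k) (hY : Integrable Y) (i : Fin 3) :
    pd i (k ⋆ Y) = pd i k ⋆ Y := by
  rw [convolution_comm_E3 k, pd_convolution hY hk, convolution_comm_E3]

lemma lap_convolution (hk : Integrable k) (hY : IsTestFunction r Y) :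
    lap (k ⋆ Y) = k ⋆ lap Y := by
  ext x
  have hpd i : pd i (fun y => pd i (k ⋆ Y) y) = k ⋆ pd i (pd i Y) := by
    simp only [pd_convolution hk hY, pd_convolution hk (hY.pd i)]
  simp only [lap, hpd, convolution_lsmul, smul_eq_mul, Finset.mul_sum]
  refine (integral_finsetSum _ fun i _ => ?_).symm
  exact ((hY.pd i).pd i).hasCompactSupport.convolutionExists_right (ContinuousLinearMap.lsmul ℝ ℝ)
    hk.locallyIntegrable ((hY.pd i).pd i).smooth.continuous x

lemma lap_convolution_left (hk : IsTestFunction s k) (hY : Integrable Y) :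
    lap (k ⋆ Y) = lap k ⋆ Y := by
  rw [convolution_comm_E3 k, lap_convolution hY hk, convolution_comm_E3]

lemma IsTestFunction.convolution (hk : Integrable k) (hk0 : ∀ x, s < ‖x‖ → k x = 0)
    (hY : IsTestFunction r Y) : IsTestFunction (r + s) (k ⋆ Y) := by
  refine ⟨contDiff_convolution hk hY, fun x hx => ?_⟩
  rw [convolution_lsmul]
  refine integral_eq_zero_of_ae (.of_forall fun t => ?_)
  rcases lt_or_ge s ‖t‖ with h | h
  · simp [hk0 t h]
  · simp [hY.eq_zero (x - t) (by linarith [norm_le_norm_sub_add x t])]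

lemma abs_convolution_le {C : ℝ} (hk : ∀ x, ‖k x‖ ≤ C) (hY : Integrable Y) (x : E3) :
    |(k ⋆ Y) x| ≤ C * ∫ y, |Y y| := by
  rw [convolution_lsmul_swap, ← integral_const_mul, ← Real.norm_eq_abs]
  refine norm_integral_le_of_norm_le (hY.abs.const_mul C) (.of_forall fun t => ?_)
  rw [norm_smul]
  exact mul_le_mul_of_nonneg_right (hk _) (norm_nonneg _)

lemma pd_comp_const_sub (f : E3 → ℝ) (a : E3) (i : Fin 3) (x : E3) :
    pd i (fun t => f (a - t)) x = -pd i f (a - x) := by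
  have := pd_comp_smul (fun y => f (y + a)) (-1) i x
  simp only [pd, fderiv_comp_add_right, neg_one_smul, neg_add_eq_sub, neg_one_mul] at this ⊢
  exact this

lemma lap_comp_const_sub (f : E3 → ℝ) (a x : E3) :
    lap (fun t => f (a - t)) x = lap f (a - x) := by
  simp only [lap, pd_comp_const_sub]
  refine Finset.sum_congr rfl fun i _ => ?_
  have := pd_const_mul (-1) (fun t => pd i f (a - t)) i x
  simp only [neg_one_mul] at this
  rw [this, pd_comp_const_sub, neg_neg]

lemma IsTestFunction.comp_const_sub (hY : IsTestFunction r Y) (a : E3) :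
    IsTestFunction (‖a‖ + r) fun t => Y (a - t) := by
  refine ⟨hY.smooth.comp (contDiff_const.sub contDiff_id), fun t ht => hY.eq_zero _ ?_⟩
  linarith [norm_sub_norm_le t a, norm_sub_rev t a]

lemma lap_truncatedNewton_convolution (hY : IsTestFunction r Y) (x : E3) :
    lap (truncatedNewton ⋆ Y) x
      = (∫ y, lap smoothNewton y) * Y x - (lap smoothNewton ⋆ Y) x := by
  have := integral_truncatedNewton_mul_lap (hY.comp_const_sub x)
  simpa only [lap_comp_const_sub, sub_zero, lap_convolution integrable_truncatedNewton hY,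
    convolution_lsmul, smul_eq_mul] using this

end Convolution

/-- `(Z, E)` solves `lap Z = Y + E` with `Z` and `E` supported at distance at most `s` from the ball
of radius `r` carrying `Y`; the error `E` is smoothed out at scale `s`. -/
structure IsParametrix (C s r : ℝ) (Y Z E : E3 → ℝ) : Prop where
  isTestFunction : IsTestFunction (r + s) Z
  isTestFunction_error : IsTestFunction (r + s) E
  lap_eq : ∀ x, lap Z x = Y x + E x
  abs_pd_error_le : ∀ i x, |pd i E x| ≤ C / s ^ 4 * ∫ y, |Y y|
  abs_lap_error_le : ∀ x, |lap E x| ≤ C / s ^ 5 * ∫ y, |Y y|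

lemma exists_isParametrix_one : ∃ C : ℝ, 0 ≤ C ∧ ∀ (r : ℝ) (Y : E3 → ℝ), IsTestFunction r Y →
    ∃ Z E, IsParametrix C 1 r Y Z E := by
  set c := ∫ y, lap smoothNewton y with hc
  have hc0 : c ≠ 0 := integral_lap_smoothNewton_ne_zero
  have he : IsTestFunction 1 fun x => -c⁻¹ * lap smoothNewton x :=
    isTestFunction_lap_smoothNewton.const_smul _
  obtain ⟨C₁, hC₁, hgrad⟩ := he.grad.exists_norm_le
  obtain ⟨C₂, -, hlap⟩ := he.lap.exists_norm_le
  refine ⟨max C₁ C₂, le_max_of_le_left hC₁, fun r Y hY => ⟨fun x => c⁻¹ * (truncatedNewton ⋆ Y) x,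
    (fun x => -c⁻¹ * lap smoothNewton x) ⋆ Y, ?_, ?_, fun x => ?_, fun i x => ?_, fun x => ?_⟩⟩
  · exact (IsTestFunction.convolution integrable_truncatedNewton
      (fun _ => truncatedNewton_eq_zero) hY).const_smul _
  · exact IsTestFunction.convolution he.integrable he.eq_zero hY
  · have hE : ((fun x => -c⁻¹ * lap smoothNewton x) ⋆ Y) x
        = -c⁻¹ * (lap smoothNewton ⋆ Y) x :=
      congrFun (smul_convolution (y := -c⁻¹) (f := lap smoothNewton)) x
    rw [lap_const_mul, lap_truncatedNewton_convolution hY, hE, ← hc]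
    field_simp
    ring
  · rw [pd_convolution_left he hY.integrable, one_pow, div_one]
    exact abs_convolution_le (fun y => ((PiLp.norm_apply_le _ i).trans (hgrad y)).trans
      (le_max_left _ _)) hY.integrable x
  · rw [lap_convolution_left he hY.integrable, one_pow, div_one]
    exact abs_convolution_le (fun y => (hlap y).trans (le_max_right _ _)) hY.integrable x

lemma IsParametrix.dilate {C s r : ℝ} {Y Z E : E3 → ℝ} (hs : 0 < s)
    (h : IsParametrix C 1 (r / s) (fun x => Y (s • x)) Z E) :
    IsParametrix C s r Y (fun x => s ^ 2 * Z (s⁻¹ • x)) (fun x => E (s⁻¹ • x)) := by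
  have hs' : 0 < s⁻¹ := inv_pos.2 hs
  have hr : (r / s + 1) / s⁻¹ = r + s := by field_simp
  have hI : ∫ y, |Y y| = s ^ 3 * ∫ y, |Y (s • y)| :=
    (integral_comp_smul_E3 (fun y => |Y y|) hs).symm
  refine ⟨hr ▸ (h.isTestFunction.comp_smul hs').const_smul _,
    hr ▸ h.isTestFunction_error.comp_smul hs', fun x => ?_, fun i x => ?_, fun x => ?_⟩
  · rw [lap_const_mul, lap_comp_smul, h.lap_eq, smul_inv_smul₀ hs.ne']
    field_simp
  · rw [pd_comp_smul, abs_mul, abs_of_pos hs', hI]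
    refine (mul_le_mul_of_nonneg_left (h.abs_pd_error_le i _) hs'.le).trans_eq ?_
    field_simp
  · rw [lap_comp_smul, abs_mul, abs_of_pos (pow_pos hs' 2), hI]
    refine (mul_le_mul_of_nonneg_left (h.abs_lap_error_le _) (pow_pos hs' 2).le).trans_eq ?_
    field_simp

lemma exists_isParametrix : ∃ C : ℝ, 0 ≤ C ∧ ∀ (s r : ℝ) (Y : E3 → ℝ), 0 < s →
    IsTestFunction r Y → ∃ Z E, IsParametrix C s r Y Z E := by
  obtain ⟨C, hC, h⟩ := exists_isParametrix_one
  refine ⟨C, hC, fun s r Y hs hY => ?_⟩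
  obtain ⟨Z, E, hZE⟩ := h (r / s) _ (hY.comp_smul hs)
  exact ⟨_, _, hZE.dilate hs⟩

/-! ### Cutoff functions and integrals over balls -/

section PointwiseBounds

variable {v w : E3 → E3}

lemma norm_sq_E3 (a : E3) : ‖a‖ ^ 2 = a 0 ^ 2 + a 1 ^ 2 + a 2 ^ 2 := by
  rw [EuclideanSpace.real_norm_sq_eq, Fin.sum_univ_three]

lemma abs_sum_mul_le (a b : E3) : |∑ i, a i * b i| ≤ ‖a‖ * ‖b‖ := by
  have h : ∑ i, a i * b i = inner ℝ b a := by simp [PiLp.inner_apply]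
  rw [h, mul_comm]
  exact abs_real_inner_le_norm b a

lemma abs_advect_le (a : E3 → E3) (f : E3 → ℝ) (x : E3) :
    |advect a f x| ≤ ‖a x‖ * ‖grad f x‖ :=
  abs_sum_mul_le (a x) (grad f x)

lemma gradSq_nonneg (v : E3 → E3) (x : E3) : 0 ≤ gradSq v x :=
  Finset.sum_nonneg fun _ _ => Finset.sum_nonneg fun _ _ => sq_nonneg _

lemma vdiv_sq_le (v : E3 → E3) (x : E3) : vdiv v x ^ 2 ≤ 3 * gradSq v x := by
  simp only [vdiv, gradSq, Fin.sum_univ_three]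
  nlinarith [sq_nonneg (pd 0 (fun y => v y 0) x - pd 1 (fun y => v y 1) x),
    sq_nonneg (pd 0 (fun y => v y 0) x - pd 2 (fun y => v y 2) x),
    sq_nonneg (pd 1 (fun y => v y 1) x - pd 2 (fun y => v y 2) x)]

lemma gradSq_sub_le (hv : ContDiff ℝ (⊤ : ℕ∞) v) (hw : ContDiff ℝ (⊤ : ℕ∞) w) (x : E3) :
    gradSq (fun y => v y - w y) x ≤ 2 * gradSq v x + 2 * gradSq w x := by
  simp only [gradSq, Finset.mul_sum, ← Finset.sum_add_distrib]
  refine Finset.sum_le_sum fun j _ => Finset.sum_le_sum fun i _ => ?_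
  simp (disch := fun_prop) only [PiLp.sub_apply, pd_sub]
  nlinarith [sq_nonneg (pd i (fun y => v y j) x + pd i (fun y => w y j) x)]

lemma gradSq_le_of_abs_pd_le {e : ℝ} {x : E3} (h : ∀ i j, |pd i (fun y => v y j) x| ≤ e) :
    gradSq v x ≤ 9 * e ^ 2 := by
  calc gradSq v x ≤ ∑ _j : Fin 3, ∑ _i : Fin 3, e ^ 2 :=
        Finset.sum_le_sum fun j _ => Finset.sum_le_sum fun i _ => sq_le_sq.2 <|
          (h i j).trans (le_abs_self e)
    _ = 9 * e ^ 2 := by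
        simp only [Finset.sum_const, Finset.card_univ, Fintype.card_fin, nsmul_eq_mul]
        push_cast
        ring

lemma grad_comp_smul (f : E3 → ℝ) (a : ℝ) (x : E3) :
    grad (fun y => f (a • y)) x = a • grad f (a • x) := by
  ext i
  exact pd_comp_smul f a i x

lemma gradSq_grad_comp_smul (f : E3 → ℝ) (a : ℝ) (x : E3) :
    gradSq (grad fun y => f (a • y)) x = a ^ 4 * gradSq (grad f) (a • x) := by
  have h i j : pd i (fun y => pd j f (a • y)) x = a * pd i (pd j f) (a • x) :=
    pd_comp_smul _ a i x
  simp only [gradSq, grad_apply, pd_comp_smul, pd_const_mul, h, Finset.mul_sum]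
  refine Finset.sum_congr rfl fun j _ => Finset.sum_congr rfl fun i _ => ?_
  ring

end PointwiseBounds

/-- A smooth cutoff between the balls of radius `R` and `3 * R / 2`, with derivative bounds
scaling as they should. The weight `φ` in the gradient bound allows `∇φ` to be absorbed into terms
carrying the factor `φ`. -/
structure IsCutoff (c R : ℝ) (φ : E3 → ℝ) : Prop where
  isTestFunction : IsTestFunction (3 * R / 2) φ
  nonneg : ∀ x, 0 ≤ φ x
  le_one : ∀ x, φ x ≤ 1
  eq_one : ∀ x ∈ ball3 R, φ x = 1
  norm_grad_sq_le : ∀ x, ‖grad φ x‖ ^ 2 ≤ (c / R) ^ 2 * φ x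
  gradSq_grad_le : ∀ x, gradSq (grad φ) x ≤ (c / R ^ 2) ^ 2

lemma exists_isCutoff_one : ∃ c φ, 0 ≤ c ∧ IsCutoff c 1 φ := by
  let B : ContDiffBump (0 : E3) := ⟨1, 3 / 2, by norm_num, by norm_num⟩
  have hB : IsTestFunction (3 * 1 / 2) B := ⟨B.contDiff, fun x hx => B.zero_of_le_dist <| by
    rw [dist_zero_right]
    exact le_of_eq_of_le (by norm_num [B]) hx.le⟩
  have hs := hB.smooth
  have hBB := hB.mul hs
  obtain ⟨c₁, hc₁, hgrad⟩ := hB.grad.exists_norm_le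
  obtain ⟨c₂, hc₂, hhess⟩ := hBB.grad.gradSq.exists_norm_le
  refine ⟨2 * c₁ + √c₂, fun x => B x * B x, by positivity, hBB, fun x => mul_self_nonneg _,
    fun x => mul_le_one₀ B.le_one B.nonneg B.le_one, fun x hx => ?_, fun x => ?_, fun x => ?_⟩
  · rw [B.one_of_mem_closedBall (ball_subset_closedBall hx), one_mul]
  · have hgradBB : grad (fun y => B y * B y) x = (2 * B x) • grad B x := by
      ext i
      simp (disch := fun_prop) only [grad_apply, pd_mul, PiLp.smul_apply, smul_eq_mul]
      ring
    rw [hgradBB, norm_smul, mul_pow, Real.norm_eq_abs, sq_abs, div_one]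
    have hc : ‖grad B x‖ ^ 2 ≤ c₁ ^ 2 := pow_le_pow_left₀ (norm_nonneg _) (hgrad x) 2
    nlinarith [mul_le_mul_of_nonneg_left hc (sq_nonneg (B x)), Real.sqrt_nonneg c₂,
      mul_nonneg (mul_nonneg hc₁ (Real.sqrt_nonneg c₂)) (sq_nonneg (B x)),
      mul_nonneg (sq_nonneg √c₂) (sq_nonneg (B x))]
  · refine (le_abs_self _).trans ((hhess x).trans ?_)
    rw [one_pow, div_one]
    nlinarith [Real.sq_sqrt hc₂, Real.sqrt_nonneg c₂]

lemma IsCutoff.dilate {c R : ℝ} {φ : E3 → ℝ} (hφ : IsCutoff c 1 φ) (hR : 0 < R) :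
    IsCutoff c R fun x => φ (R⁻¹ • x) := by
  have hR' : 0 < R⁻¹ := inv_pos.2 hR
  refine ⟨?_, fun x => hφ.nonneg _, fun x => hφ.le_one _, fun x hx => hφ.eq_one _ ?_,
    fun x => ?_, fun x => ?_⟩
  · have := hφ.isTestFunction.comp_smul hR'
    rwa [div_inv_eq_mul, mul_one, div_mul_eq_mul_div] at this
  · rw [ball3, mem_ball_zero_iff] at hx ⊢
    rwa [norm_smul, norm_inv, Real.norm_of_nonneg hR.le, inv_mul_lt_iff₀ hR, mul_one]
  · rw [grad_comp_smul, norm_smul, mul_pow, Real.norm_of_nonneg hR'.le, div_eq_inv_mul, mul_pow,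
      mul_assoc]
    exact mul_le_mul_of_nonneg_left (by simpa using hφ.norm_grad_sq_le (R⁻¹ • x)) (sq_nonneg _)
  · rw [gradSq_grad_comp_smul, div_eq_inv_mul, mul_pow, ← inv_pow, ← pow_mul]
    exact mul_le_mul_of_nonneg_left (by simpa using hφ.gradSq_grad_le (R⁻¹ • x)) (by positivity)

lemma exists_isCutoff : ∃ c : ℝ, 0 ≤ c ∧ ∀ R : ℝ, 0 < R → ∃ φ, IsCutoff c R φ := by
  obtain ⟨c, φ, hc, hφ⟩ := exists_isCutoff_one
  exact ⟨c, hc, fun R hR => ⟨_, hφ.dilate hR⟩⟩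

section BallIntegrals

variable {F G : E3 → ℝ} {ρ : ℝ}

lemma integrableOn_ball3 (hG : Continuous G) (ρ : ℝ) : IntegrableOn G (ball3 ρ) :=
  (hG.continuousOn.integrableOn_compact (isCompact_closedBall 0 ρ)).mono_set
    ball_subset_closedBall

lemma integral_le_setIntegral (hF : Integrable F) (hG : Continuous G)
    (h : ∀ x ∈ ball3 ρ, F x ≤ G x) (h0 : ∀ x ∉ ball3 ρ, F x = 0) :
    ∫ x, F x ≤ ∫ x in ball3 ρ, G x := by
  rw [← setIntegral_eq_integral_of_forall_compl_eq_zero h0]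
  exact setIntegral_mono_on hF.integrableOn (integrableOn_ball3 hG ρ) measurableSet_ball h

/-- The volume of the unit ball. -/
def unitVol : ℝ := (volume : Measure E3).real (ball3 1)

lemma unitVol_pos : 0 < unitVol :=
  ENNReal.toReal_pos (measure_ball_pos _ _ one_pos).ne' measure_ball_lt_top.ne

lemma volume_ball3 (hρ : 0 < ρ) : (volume : Measure E3).real (ball3 ρ) = ρ ^ 3 * unitVol := by
  rw [ball3, Measure.real, Measure.addHaar_ball_of_pos _ _ hρ, finrank_E3, ENNReal.toReal_mul,
    ENNReal.toReal_ofReal (by positivity)]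
  rfl

lemma setIntegral_rpow_le {q : ℝ} (hq : 1 ≤ q) (hρ : 0 < ρ) (hF : Continuous F)
    (hF0 : ∀ x, 0 ≤ F x) : (∫ x in ball3 ρ, F x) ^ q
      ≤ (ρ ^ 3 * unitVol) ^ (q - 1) * ∫ x in ball3 ρ, F x ^ q := by
  have hV : 0 < ρ ^ 3 * unitVol := mul_pos (pow_pos hρ 3) unitVol_pos
  have jensen := (convexOn_rpow hq).map_set_average_le
    (Real.continuous_rpow_const (by linarith)).continuousOn isClosed_Ici
    (measure_ball_pos volume (0 : E3) hρ).ne' measure_ball_lt_top.ne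
    (.of_forall hF0) (integrableOn_ball3 hF ρ)
    (integrableOn_ball3 (hF.rpow_const fun _ => .inr (by linarith)) ρ)
  rw [setAverage_eq, setAverage_eq, ← ball3, volume_ball3 hρ, smul_eq_mul, smul_eq_mul,
    Real.mul_rpow (inv_nonneg.2 hV.le) (integral_nonneg hF0), Real.inv_rpow hV.le,
    inv_mul_le_iff₀ (by positivity), ← mul_assoc, ← Real.rpow_neg_one, ← Real.rpow_add hV]
    at jensen
  exact jensen

lemma sq_setIntegral_le (hρ : 0 < ρ) (hF : Continuous F) (hF0 : ∀ x, 0 ≤ F x) :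
    (∫ x in ball3 ρ, F x) ^ 2 ≤ ρ ^ 3 * unitVol * ∫ x in ball3 ρ, F x ^ 2 := by
  simpa only [Real.rpow_two, show (2 : ℝ) - 1 = 1 by norm_num, Real.rpow_one] using
    setIntegral_rpow_le one_le_two hρ hF hF0

end BallIntegrals

/-! ### Solenoidal correction of a localized divergence-free field -/

section Corrector

variable {R r c C : ℝ} {φ : E3 → ℝ} {u Y Z E : E3 → E3}

lemma lap_vdiv (hZ : ContDiff ℝ (⊤ : ℕ∞) Z) (x : E3) :
    lap (vdiv Z) x = ∑ k, pd k (lap fun y => Z y k) x := by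
  simp (disch := fun_prop) only [← lap_pd]
  exact lap_sum Finset.univ (F := fun k => pd k fun y => Z y k) (by fun_prop) x

lemma lap_vdiv_of_lap_eq_add (hZ : ContDiff ℝ (⊤ : ℕ∞) Z) (hY : ContDiff ℝ (⊤ : ℕ∞) Y)
    (hE : ContDiff ℝ (⊤ : ℕ∞) E) (h : ∀ k x, lap (fun y => Z y k) x = Y x k + E x k) (x : E3) :
    lap (vdiv Z) x = vdiv Y x + vdiv E x := by
  rw [lap_vdiv hZ]
  simp (disch := fun_prop) only [funext (h _), pd_add, Finset.sum_add_distrib]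
  rfl

lemma vdiv_sub_corrector_eq_zero (hZ : ContDiff ℝ (⊤ : ℕ∞) Z) (hY : ContDiff ℝ (⊤ : ℕ∞) Y)
    (hE : ContDiff ℝ (⊤ : ℕ∞) E) (h : ∀ k x, lap (fun y => Z y k) x = Y x k + E x k) (x : E3) :
    vdiv (fun y => Y y - (grad (vdiv Z) y - E y)) x = 0 := by
  rw [vdiv_sub hY (by fun_prop), vdiv_sub (by fun_prop) hE, ← lap_eq_vdiv_grad,
    lap_vdiv_of_lap_eq_add hZ hY hE h]
  ring

lemma integral_gradSq_corrector_le (hZ : IsTestFunction r Z) (hY : IsTestFunction r Y)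
    (hE : IsTestFunction r E) (h : ∀ k x, lap (fun y => Z y k) x = Y x k + E x k) :
    ∫ x, gradSq (fun y => grad (vdiv Z) y - E y) x
      ≤ 4 * (∫ x, vdiv Y x ^ 2) + 14 * ∫ x, gradSq E x := by
  have hq := hZ.vdiv
  have hYsq : Integrable fun x => vdiv Y x ^ 2 := by
    simpa only [sq] using (hY.vdiv.mul hY.vdiv.smooth).integrable
  have hnull := hq.null_hessian.const_mul 2
  have hpoint x : gradSq (fun y => grad (vdiv Z) y - E y) x
      - 2 * (gradSq (grad (vdiv Z)) x - lap (vdiv Z) x ^ 2)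
      ≤ 4 * vdiv Y x ^ 2 + 14 * gradSq E x := by
    rw [lap_vdiv_of_lap_eq_add hZ.smooth hY.smooth hE.smooth h]
    linarith [gradSq_sub_le hq.grad.smooth hE.smooth x, vdiv_sq_le E x,
      add_sq_le (a := vdiv Y x) (b := vdiv E x)]
  calc ∫ x, gradSq (fun y => grad (vdiv Z) y - E y) x
      = ∫ x, (gradSq (fun y => grad (vdiv Z) y - E y) x
          - 2 * (gradSq (grad (vdiv Z)) x - lap (vdiv Z) x ^ 2)) := by
        rw [integral_sub (hq.grad.sub hE).gradSq.integrable hnull.integrable,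
          hnull.integral_eq_zero, sub_zero]
    _ ≤ ∫ x, (4 * vdiv Y x ^ 2 + 14 * gradSq E x) :=
        integral_mono ((hq.grad.sub hE).gradSq.integrable.sub hnull.integrable)
          ((hYsq.const_mul 4).add (hE.gradSq.integrable.const_mul 14)) hpoint
    _ = _ := by
        rw [integral_add (hYsq.const_mul 4) (hE.gradSq.integrable.const_mul 14),
          integral_const_mul, integral_const_mul]

lemma integral_vdiv_smul_sq_le (hφ : IsCutoff c R φ) (hR : 0 < R) (hu : ContDiff ℝ (⊤ : ℕ∞) u)
    (hdiv : ∀ x, vdiv u x = 0) :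
    ∫ x, vdiv (fun y => φ y • u y) x ^ 2 ≤ (c / R) ^ 2 * ∫ x in ball3 (2 * R), ‖u x‖ ^ 2 := by
  have htest := (hφ.isTestFunction.smul hu).vdiv
  rw [← integral_const_mul]
  refine integral_le_setIntegral (by simpa only [sq] using (htest.mul htest.smooth).integrable)
    (by fun_prop) (fun x _ => ?_) fun x hx => ?_
  · rw [vdiv_smul hφ.isTestFunction.smooth hu, hdiv, mul_zero, zero_add]
    calc advect u φ x ^ 2 ≤ (‖u x‖ * ‖grad φ x‖) ^ 2 :=
          sq_le_sq.2 ((abs_advect_le u φ x).trans (le_abs_self _))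
      _ = ‖u x‖ ^ 2 * ‖grad φ x‖ ^ 2 := mul_pow _ _ _
      _ ≤ ‖u x‖ ^ 2 * (c / R) ^ 2 := by
          refine mul_le_mul_of_nonneg_left ((hφ.norm_grad_sq_le x).trans ?_) (sq_nonneg _)
          exact mul_le_of_le_one_right (sq_nonneg _) (hφ.le_one x)
      _ = (c / R) ^ 2 * ‖u x‖ ^ 2 := mul_comm _ _
  · rw [htest.eq_zero_of_notMem_ball3 (by linarith) hx, zero_pow two_ne_zero]

lemma IsCutoff.integral_abs_smul_coord_le (hφ : IsCutoff c R φ) (hR : 0 < R)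
    (hu : ContDiff ℝ (⊤ : ℕ∞) u) (j : Fin 3) :
    ∫ x, |(φ x • u x) j| ≤ ∫ x in ball3 (2 * R), ‖u x‖ := by
  have htest := (hφ.isTestFunction.smul hu).coord j
  refine integral_le_setIntegral htest.integrable.abs hu.continuous.norm (fun x _ => ?_)
    fun x hx => ?_
  · rw [PiLp.smul_apply, smul_eq_mul, abs_mul, abs_of_nonneg (hφ.nonneg x)]
    exact (mul_le_of_le_one_left (abs_nonneg _) (hφ.le_one x)).trans (PiLp.norm_apply_le (u x) j)
  · rw [htest.eq_zero_of_notMem_ball3 (by linarith) hx, abs_zero]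

lemma integral_gradSq_le_of_abs_pd_le {e : ℝ} (hE : IsTestFunction r E) (hr : r < 2 * R)
    (hR : 0 < R) (h : ∀ i j x, |pd i (fun y => E y j) x| ≤ e) :
    ∫ x, gradSq E x ≤ 72 * unitVol * R ^ 3 * e ^ 2 := by
  calc ∫ x, gradSq E x ≤ ∫ _x in ball3 (2 * R), 9 * e ^ 2 :=
        integral_le_setIntegral hE.gradSq.integrable continuous_const
          (fun x _ => gradSq_le_of_abs_pd_le fun i j => h i j x)
          fun x hx => hE.gradSq.eq_zero_of_notMem_ball3 hr hx
    _ = 72 * unitVol * R ^ 3 * e ^ 2 := by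
        rw [setIntegral_const, volume_ball3 (by positivity), smul_eq_mul]
        ring

/-- `∇q - E` is a correction of `φ u`, made of a gradient and a small error, which renders
`φ u - (∇q - E)` divergence free at the cost of an energy of order `R⁻² ∫ ‖u‖²`. -/
structure IsCorrector (K R : ℝ) (φ : E3 → ℝ) (u : E3 → E3) (q : E3 → ℝ) (E : E3 → E3) : Prop where
  isTestFunction : IsTestFunction (7 * R / 4) q
  isTestFunction_error : IsTestFunction (7 * R / 4) E
  vdiv_eq_zero : ∀ x, vdiv (fun y => φ y • u y - (grad q y - E y)) x = 0
  integral_gradSq_le : ∫ x, gradSq (fun y => grad q y - E y) x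
    ≤ K / R ^ 2 * ∫ x in ball3 (2 * R), ‖u x‖ ^ 2
  abs_lap_error_le : ∀ j x, |lap (fun y => E y j) x| ≤ K / R ^ 5 * ∫ x in ball3 (2 * R), ‖u x‖

lemma isCorrector_of_isParametrix (hC : 0 ≤ C) (hR : 0 < R) (hφ : IsCutoff c R φ)
    (hu : ContDiff ℝ (⊤ : ℕ∞) u) (hdiv : ∀ x, vdiv u x = 0)
    (h : ∀ j, IsParametrix C (R / 4) (3 * R / 2) (fun x => (φ x • u x) j)
      (fun x => Z x j) (fun x => E x j)) :
    IsCorrector (4 * c ^ 2 + 126 * (2048 * C * unitVol) ^ 2 + 1024 * C) R φ u (vdiv Z) E := by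
  have hr : 3 * R / 2 + R / 4 = 7 * R / 4 := by ring
  have hZ : IsTestFunction (7 * R / 4) Z := .of_coord fun j => hr ▸ (h j).isTestFunction
  have hE : IsTestFunction (7 * R / 4) E := .of_coord fun j => hr ▸ (h j).isTestFunction_error
  have hY := (hφ.isTestFunction.smul hu).mono (r' := 7 * R / 4) (by linarith)
  set I := ∫ x in ball3 (2 * R), ‖u x‖
  set U := ∫ x in ball3 (2 * R), ‖u x‖ ^ 2
  have hU0 : 0 ≤ U := integral_nonneg fun x => sq_nonneg _
  have hI0 : 0 ≤ I := integral_nonneg fun x => norm_nonneg _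
  have hv := unitVol_pos
  have hIU : I ^ 2 ≤ (2 * R) ^ 3 * unitVol * U :=
    sq_setIntegral_le (by positivity) hu.continuous.norm fun x => norm_nonneg _
  have hYI := hφ.integral_abs_smul_coord_le hR hu
  have hpdE i j x : |pd i (fun y => E y j) x| ≤ C / (R / 4) ^ 4 * I :=
    ((h j).abs_pd_error_le i x).trans (mul_le_mul_of_nonneg_left (hYI j) (by positivity))
  refine ⟨hZ.vdiv, hE, vdiv_sub_corrector_eq_zero hZ.smooth hY.smooth hE.smooth
    fun k => (h k).lap_eq, ?_, fun j x => ?_⟩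
  · have hEU : ∫ x, gradSq E x ≤ 9 * (2048 * C * unitVol) ^ 2 / R ^ 2 * U := by
      calc ∫ x, gradSq E x ≤ 72 * unitVol * R ^ 3 * (C / (R / 4) ^ 4 * I) ^ 2 :=
            integral_gradSq_le_of_abs_pd_le hE (by linarith) hR hpdE
        _ = 72 * unitVol * R ^ 3 * (C / (R / 4) ^ 4) ^ 2 * I ^ 2 := by ring
        _ ≤ 72 * unitVol * R ^ 3 * (C / (R / 4) ^ 4) ^ 2 * ((2 * R) ^ 3 * unitVol * U) :=
            mul_le_mul_of_nonneg_left hIU (by positivity)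
        _ = 9 * (2048 * C * unitVol) ^ 2 / R ^ 2 * U := by
            field_simp
            ring
    have hsplit : (4 * c ^ 2 + 126 * (2048 * C * unitVol) ^ 2 + 1024 * C) / R ^ 2 * U
        = 4 * ((c / R) ^ 2 * U) + 14 * (9 * (2048 * C * unitVol) ^ 2 / R ^ 2 * U)
          + 1024 * C / R ^ 2 * U := by ring
    have : 0 ≤ 1024 * C / R ^ 2 * U := by positivity
    linarith [integral_gradSq_corrector_le hZ hY hE fun k => (h k).lap_eq,
      integral_vdiv_smul_sq_le hφ hR hu hdiv]
  · refine ((h j).abs_lap_error_le x).trans (mul_le_mul ?_ (hYI j)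
      (integral_nonneg fun x => abs_nonneg _) (by positivity))
    calc C / (R / 4) ^ 5 = 1024 * C / R ^ 5 := by field_simp; norm_num
      _ ≤ (4 * c ^ 2 + 126 * (2048 * C * unitVol) ^ 2 + 1024 * C) / R ^ 5 := by
          gcongr
          linarith [show 0 ≤ 4 * c ^ 2 + 126 * (2048 * C * unitVol) ^ 2 by positivity]

lemma exists_isCorrector (c : ℝ) : ∃ K : ℝ, 0 ≤ K ∧ ∀ (R : ℝ) (φ : E3 → ℝ) (u : E3 → E3), 0 < R →
    IsCutoff c R φ → ContDiff ℝ (⊤ : ℕ∞) u → (∀ x, vdiv u x = 0) →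
    ∃ q E, IsCorrector K R φ u q E := by
  obtain ⟨C, hC, parametrix⟩ := exists_isParametrix
  refine ⟨4 * c ^ 2 + 126 * (2048 * C * unitVol) ^ 2 + 1024 * C, by positivity,
    fun R φ u hR hφ hu hdiv => ?_⟩
  choose Z E h using fun j =>
    parametrix (R / 4) _ _ (by positivity) ((hφ.isTestFunction.smul hu).coord j)
  exact ⟨_, _, isCorrector_of_isParametrix (Z := fun x => WithLp.toLp 2 fun j => Z j x)
    (E := fun x => WithLp.toLp 2 fun j => E j x) hC hR hφ hu hdiv h⟩

end Corrector

/-! ### Energy identities -/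

section Energy

variable {r : ℝ} {φ q P : E3 → ℝ} {a u w b v E : E3 → E3}

lemma IsTestFunction.null_advect_energy (hφ : IsTestFunction r φ) (ha : ContDiff ℝ (⊤ : ℕ∞) a)
    (hdiv : ∀ x, vdiv a x = 0) (hv : ContDiff ℝ (⊤ : ℕ∞) v) :
    IsNullTestFunction r fun x =>
      φ x * ∑ j, v x j * (lap (fun y => v y j) x - advect a (fun y => v y j) x)
        + φ x * gradSq v x - 1 / 2 * (lap φ x + advect a φ x) * ‖v x‖ ^ 2 :=
  ((hφ.null_energy hv).sub ((hφ.null_advect_smul_inner ha hdiv hv hv).const_mul (1 / 2))).congr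
    fun x => by
      simp only [norm_sq_E3, Fin.sum_univ_three]
      ring

lemma IsMMPSolution.null_energy_w (H : IsMMPSolution u w b P) (hφ : IsTestFunction r φ) :
    IsNullTestFunction r fun x => φ x * gradSq w x
      - 1 / 2 * (lap φ x + advect u φ x) * ‖w x‖ ^ 2
      + (φ x * vdiv w x ^ 2 + vdiv w x * advect w φ x)
      + φ x * (2 * ‖w x‖ ^ 2 - ∑ j, w x j * curl3 u x j) := by
  refine ((hφ.null_advect_energy H.smooth_u H.div_u H.smooth_w).add
    (hφ.null_grad_vdiv H.smooth_w)).congr fun x => ?_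
  have e0 := H.eq_w x 0
  have e1 := H.eq_w x 1
  have e2 := H.eq_w x 2
  simp only [advect, norm_sq_E3, Fin.sum_univ_three] at e0 e1 e2 ⊢
  linear_combination (-φ x * w x 0) * e0 - φ x * w x 1 * e1 - φ x * w x 2 * e2

lemma IsMMPSolution.null_energy_b (H : IsMMPSolution u w b P) (hφ : IsTestFunction r φ) :
    IsNullTestFunction r fun x => φ x * gradSq b x
      - 1 / 2 * (lap φ x + advect u φ x) * ‖b x‖ ^ 2
      - φ x * ∑ j, b x j * advect b (fun y => u y j) x := by
  refine (hφ.null_advect_energy H.smooth_u H.div_u H.smooth_b).congr fun x => ?_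
  have e0 := H.eq_b x 0
  have e1 := H.eq_b x 1
  have e2 := H.eq_b x 2
  simp only [advect, Fin.sum_univ_three] at e0 e1 e2 ⊢
  linear_combination (-φ x * b x 0) * e0 - φ x * b x 1 * e1 - φ x * b x 2 * e2

/-- The terms of the energy identity that involve the corrector `W = ∇q - E`. -/
def correctorWork (u w b W E : E3 → E3) (x : E3) : ℝ :=
  ∑ j, u x j * lap (fun y => E y j) x - ∑ j, u x j * advect u (fun y => W y j) x
    + ∑ j, b x j * advect b (fun y => W y j) x - ∑ j, w x j * curl3 W x j

/-- The terms of the energy identity that involve derivatives of the cutoff `φ`. -/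
def cutoffFlux (u w b : E3 → E3) (φ : E3 → ℝ) (x : E3) : ℝ :=
  1 / 2 * (‖u x‖ ^ 2 + ‖b x‖ ^ 2 + ‖w x‖ ^ 2) * (lap φ x + advect u φ x)
    - 1 / 2 * ∑ j, u x j * advect u (pd j φ) x
    - advect b φ x * ∑ j, b x j * u x j
    + ∑ j, w x j * crossProduct (grad φ x) (u x) j

lemma curl3_smul (hφ : ContDiff ℝ (⊤ : ℕ∞) φ) (hu : ContDiff ℝ (⊤ : ℕ∞) u) (x : E3) (j : Fin 3) :
    curl3 (fun y => φ y • u y) x j = φ x * curl3 u x j + crossProduct (grad φ x) (u x) j := by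
  have hpd i k : pd i (fun y => (φ y • u y) k) x
      = pd i φ x * u x k + φ x * pd i (fun y => u y k) x := pd_mul hφ (by fun_prop) i x
  fin_cases j <;>
  · simp only [curl3, cross_apply, hpd, grad_apply, Fin.zero_eta, Fin.mk_one, Fin.reduceFinMk,
      Matrix.cons_val]
    ring

lemma lap_grad_sub (hq : ContDiff ℝ (⊤ : ℕ∞) q) (hE : ContDiff ℝ (⊤ : ℕ∞) E) (x : E3) (j : Fin 3) :
    lap (fun y => (grad q y - E y) j) x = pd j (lap q) x - lap (fun y => E y j) x := by
  simp (disch := fun_prop) only [PiLp.sub_apply, grad_apply, lap_sub, lap_pd]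

lemma IsMMPSolution.null_momentum (H : IsMMPSolution u w b P) {V : E3 → E3}
    (hV : IsTestFunction r V) (hdiv : ∀ x, vdiv V x = 0) :
    IsNullTestFunction r fun x => ∑ j, V x j * (lap (fun y => u y j) x
      - advect u (fun y => u y j) x + curl3 w x j + advect b (fun y => b y j) x) :=
  (hV.null_advect_of_vdiv_eq_zero hdiv H.smooth_P).congr fun x =>
    Finset.sum_congr rfl fun j _ => by
      have e := H.eq_u x j
      simp only [advect]
      linear_combination V x j * e

lemma IsMMPSolution.null_momentum_corrector (H : IsMMPSolution u w b P) (hq : IsTestFunction r q)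
    (hE : IsTestFunction r E) :
    IsNullTestFunction r fun x => ∑ j, (grad q x - E x) j * (lap (fun y => u y j) x
      - advect u (fun y => u y j) x + curl3 w x j + advect b (fun y => b y j) x)
      + correctorWork u w b (fun y => grad q y - E y) E x := by
  have hW := hq.grad.sub hE
  have hu := H.smooth_u
  have viscous := IsNullTestFunction.sum Finset.univ fun j =>
    (hW.coord j).null_mul_lap_sub (f := fun x => u x j) (by fun_prop)
  have gradient := hq.lap.null_advect hu H.div_u
  have inertia := hW.null_advect_inner hu H.div_u hu
  have lorentz := hW.null_advect_inner H.smooth_b H.div_b H.smooth_b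
  have vortex := hW.null_curl3_inner H.smooth_w
  refine ((((viscous.add gradient).sub inertia).add lorentz).add vortex).congr fun x => ?_
  simp only [lap_grad_sub hq.smooth hE.smooth]
  simp only [correctorWork, advect, Fin.sum_univ_three]
  ring

lemma IsMMPSolution.null_energy_u (H : IsMMPSolution u w b P) (hφ : IsTestFunction r φ)
    (hq : IsTestFunction r q) (hE : IsTestFunction r E)
    (hdiv : ∀ x, vdiv (fun y => φ y • u y - (grad q y - E y)) x = 0) :
    IsNullTestFunction r fun x => φ x * gradSq u x
      - 1 / 2 * (lap φ x + advect u φ x) * ‖u x‖ ^ 2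
      - φ x * ∑ j, u x j * advect b (fun y => b y j) x - φ x * ∑ j, w x j * curl3 u x j
      - ∑ j, w x j * crossProduct (grad φ x) (u x) j
      - correctorWork u w b (fun y => grad q y - E y) E x := by
  have htest := hφ.smul H.smooth_u
  refine ((((hφ.null_advect_energy H.smooth_u H.div_u H.smooth_u).add
    (htest.null_curl3_inner H.smooth_w)).sub
    (H.null_momentum (htest.sub (hq.grad.sub hE)) hdiv)).sub
    (H.null_momentum_corrector hq hE)).congr fun x => ?_
  simp only [curl3_smul hφ.smooth H.smooth_u, PiLp.sub_apply, PiLp.smul_apply, smul_eq_mul,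
    Fin.sum_univ_three]
  ring

/-- The energy balance of a solution `(u, w, b)` tested with `φ u - W`, `φ w` and `φ b`. Half of
`φ ‖∇u‖²` has been traded for `φ ‖∇ × u‖² / 2`, which completes the square in the coupling of
`∇ × u` and `w`. -/
def energyBalance (u w b W E : E3 → E3) (φ : E3 → ℝ) (x : E3) : ℝ :=
  φ x * (1 / 2 * gradSq u x + gradSq b x + gradSq w x)
    + 1 / 2 * φ x * ∑ j, (curl3 u x j - 2 * w x j) ^ 2
    + (φ x * vdiv w x ^ 2 + vdiv w x * advect w φ x)
    - cutoffFlux u w b φ x - correctorWork u w b W E x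

lemma IsMMPSolution.null_energy (H : IsMMPSolution u w b P) (hφ : IsTestFunction r φ)
    (hq : IsTestFunction r q) (hE : IsTestFunction r E)
    (hdiv : ∀ x, vdiv (fun y => φ y • u y - (grad q y - E y)) x = 0) :
    IsNullTestFunction r (energyBalance u w b (fun y => grad q y - E y) E φ) := by
  refine (((((H.null_energy_u hφ hq hE hdiv).add (H.null_energy_w hφ)).add
    (H.null_energy_b hφ)).add
    (hφ.null_advect_smul_inner H.smooth_b H.div_b H.smooth_b H.smooth_u)).add
    ((hφ.null_curl3_sq H.smooth_u H.div_u).const_mul (1 / 2))).congr fun x => ?_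
  simp only [energyBalance, cutoffFlux, advect, norm_sq_E3, Fin.sum_univ_three]
  ring

end Energy

/-! ### The local energy inequality -/

section PointwiseBounds

variable {c M R ℓ : ℝ} {φ : E3 → ℝ} {u w b W E : E3 → E3} {x : E3}

lemma mul_le_young (hR : 0 < R) (s t : ℝ) : s * t ≤ 1 / 2 * (s ^ 2 / R + R * t ^ 2) := by
  have h : 0 ≤ (s - R * t) ^ 2 / R := by positivity
  have hexpand : (s - R * t) ^ 2 / R = s ^ 2 / R - 2 * (s * t) + R * t ^ 2 := by
    field_simp
    ring
  linarith

lemma neg_le_quadratic {t s k d : ℝ} (ht : 0 ≤ t) (hk : 0 ≤ k) (h : s ^ 2 ≤ 4 * k * t) :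
    -k ≤ t * d ^ 2 + d * s := by
  have hsq : (d * s) ^ 2 ≤ (t * d ^ 2 + k) ^ 2 := by
    nlinarith [mul_le_mul_of_nonneg_left h (sq_nonneg d), sq_nonneg (t * d ^ 2 - k)]
  linarith [(abs_le_of_sq_le_sq' hsq (by positivity)).1]

lemma abs_sum_mul_crossProduct_le (w g v : E3) :
    |∑ j, w j * crossProduct g v j| ≤ ‖w‖ * (‖g‖ * ‖v‖) := by
  refine (abs_sum_mul_le w (WithLp.toLp 2 (crossProduct g v))).trans
    (mul_le_mul_of_nonneg_left (le_of_sq_le_sq ?_ (by positivity)) (norm_nonneg _))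
  simp only [mul_pow, norm_sq_E3, cross_apply, Matrix.cons_val]
  linarith [sq_nonneg (g 0 * v 0 + g 1 * v 1 + g 2 * v 2)]

lemma abs_sum_mul_advect_le (v a V : E3 → E3) (x : E3) :
    |∑ j, v x j * advect a (fun y => V y j) x| ≤ ‖v x‖ * (‖a x‖ * √(gradSq V x)) := by
  refine (abs_sum_mul_le (v x) (WithLp.toLp 2 fun j => advect a (fun y => V y j) x)).trans
    (mul_le_mul_of_nonneg_left (le_of_sq_le_sq ?_ (by positivity)) (norm_nonneg _))
  rw [mul_pow, Real.sq_sqrt (gradSq_nonneg V x), EuclideanSpace.real_norm_sq_eq,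
    EuclideanSpace.real_norm_sq_eq, gradSq, Finset.mul_sum]
  exact Finset.sum_le_sum fun j _ =>
    Finset.sum_mul_sq_le_sq_mul_sq Finset.univ (a x) fun i => pd i (fun y => V y j) x

lemma sum_curl3_sq_le (v : E3 → E3) (x : E3) : ∑ j, curl3 v x j ^ 2 ≤ 2 * gradSq v x := by
  simp only [curl3, gradSq, Fin.sum_univ_three, Matrix.cons_val]
  nlinarith [sq_nonneg (pd 1 (fun y => v y 2) x + pd 2 (fun y => v y 1) x),
    sq_nonneg (pd 2 (fun y => v y 0) x + pd 0 (fun y => v y 2) x),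
    sq_nonneg (pd 0 (fun y => v y 1) x + pd 1 (fun y => v y 0) x),
    sq_nonneg (pd 0 (fun y => v y 0) x), sq_nonneg (pd 1 (fun y => v y 1) x),
    sq_nonneg (pd 2 (fun y => v y 2) x)]

lemma abs_sum_mul_curl3_le (hR : 0 < R) (w V : E3 → E3) (x : E3) :
    |∑ j, w x j * curl3 V x j| ≤ 1 / 2 * (‖w x‖ ^ 2 / R) + R * gradSq V x := by
  have hcurl := sum_curl3_sq_le V x
  rw [← EuclideanSpace.real_norm_sq_eq (WithLp.toLp 2 (curl3 V x))] at hcurl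
  refine ((abs_sum_mul_le (w x) (WithLp.toLp 2 (curl3 V x))).trans
    (mul_le_young hR _ _)).trans ?_
  linarith [mul_le_mul_of_nonneg_left hcurl hR.le]

lemma abs_sum_mul_advect_self_le (hR : 0 < R) (v V : E3 → E3) (hv : ‖v x‖ ≤ M) :
    |∑ j, v x j * advect v (fun y => V y j) x|
      ≤ M * (1 / 2 * (‖v x‖ ^ 2 / R + R * gradSq V x)) := by
  have young := mul_le_young hR ‖v x‖ √(gradSq V x)
  rw [Real.sq_sqrt (gradSq_nonneg V x)] at young
  refine (abs_sum_mul_advect_le v v V x).trans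
    (mul_le_mul hv young (by positivity) ((norm_nonneg _).trans hv))

lemma abs_sum_mul_lap_le (v E : E3 → E3) (h : ∀ j, |lap (fun y => E y j) x| ≤ ℓ) :
    |∑ j, v x j * lap (fun y => E y j) x| ≤ 3 * ℓ * ‖v x‖ := by
  calc |∑ j, v x j * lap (fun y => E y j) x| ≤ ∑ _j : Fin 3, ‖v x‖ * ℓ :=
        (Finset.abs_sum_le_sum_abs _ _).trans <| Finset.sum_le_sum fun j _ => by
          rw [abs_mul]
          exact mul_le_mul (PiLp.norm_apply_le (v x) j) (h j) (abs_nonneg _) (norm_nonneg _)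
    _ = 3 * ℓ * ‖v x‖ := by
        rw [Finset.sum_const, Finset.card_univ, Fintype.card_fin, nsmul_eq_mul]
        push_cast
        ring

lemma correctorWork_le (hR : 0 < R) (hu : ‖u x‖ ≤ M) (hb : ‖b x‖ ≤ M)
    (hE : ∀ j, |lap (fun y => E y j) x| ≤ ℓ) :
    correctorWork u w b W E x ≤ (1 + M) / R * (‖u x‖ ^ 2 + ‖b x‖ ^ 2 + ‖w x‖ ^ 2)
      + (1 + M) * R * gradSq W x + 3 * ℓ * ‖u x‖ := by
  have hM : 0 ≤ M := (norm_nonneg _).trans hu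
  have hlap := (abs_le.1 (abs_sum_mul_lap_le u E hE)).2
  have hinertia := (abs_le.1 (abs_sum_mul_advect_self_le hR u W hu)).1
  have hlorentz := (abs_le.1 (abs_sum_mul_advect_self_le hR b W hb)).2
  have hvortex := (abs_le.1 (abs_sum_mul_curl3_le hR w W x)).1
  have hslack : 0 ≤ (2 + M) * (‖u x‖ ^ 2 / R) + (2 + M) * (‖b x‖ ^ 2 / R)
      + (1 + 2 * M) * (‖w x‖ ^ 2 / R) := by positivity
  have hexpand : (1 + M) / R * (‖u x‖ ^ 2 + ‖b x‖ ^ 2 + ‖w x‖ ^ 2)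
      = (1 + M) * (‖u x‖ ^ 2 / R + ‖b x‖ ^ 2 / R + ‖w x‖ ^ 2 / R) := by ring
  rw [correctorWork, hexpand]
  linarith

lemma IsCutoff.norm_grad_le (hc : 0 ≤ c) (hR : 0 < R) (hφ : IsCutoff c R φ) (x : E3) :
    ‖grad φ x‖ ≤ c / R :=
  le_of_sq_le_sq ((hφ.norm_grad_sq_le x).trans
    (mul_le_of_le_one_right (sq_nonneg _) (hφ.le_one x))) (by positivity)

lemma IsCutoff.sqrt_gradSq_grad_le (hc : 0 ≤ c) (hφ : IsCutoff c R φ) (x : E3) :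
    √(gradSq (grad φ) x) ≤ c / R ^ 2 :=
  Real.sqrt_le_iff.2 ⟨by positivity, hφ.gradSq_grad_le x⟩

lemma IsCutoff.lap_le (hc : 0 ≤ c) (hφ : IsCutoff c R φ) (x : E3) :
    lap φ x ≤ 2 * (c / R ^ 2) := by
  refine (abs_le_of_sq_le_sq' ?_ (by positivity)).2
  rw [lap_eq_vdiv_grad]
  nlinarith [vdiv_sq_le (grad φ) x, hφ.gradSq_grad_le x, sq_nonneg (c / R ^ 2)]

lemma IsCutoff.cutoffFlux_le (hc : 0 ≤ c) (hR : 1 ≤ R) (hφ : IsCutoff c R φ) (hu : ‖u x‖ ≤ M)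
    (hb : ‖b x‖ ≤ M) : cutoffFlux u w b φ x
      ≤ 2 * c * (1 + M) / R * (‖u x‖ ^ 2 + ‖b x‖ ^ 2 + ‖w x‖ ^ 2) := by
  have hR0 : 0 < R := one_pos.trans_le hR
  have hM : 0 ≤ M := (norm_nonneg _).trans hu
  have hgrad := hφ.norm_grad_le hc hR0 x
  have hk : 0 ≤ c / R := by positivity
  have hscale : c / R ^ 2 ≤ c / R :=
    div_le_div_of_nonneg_left hc hR0 (le_self_pow₀ hR two_ne_zero)
  set X := ‖u x‖ ^ 2 + ‖b x‖ ^ 2 + ‖w x‖ ^ 2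
  have hX : 0 ≤ X := by positivity
  have huu : ‖u x‖ * ‖u x‖ ≤ X := by linarith [sq_nonneg ‖b x‖, sq_nonneg ‖w x‖]
  have hbu : ‖b x‖ * ‖u x‖ ≤ X / 2 := by linarith [two_mul_le_add_sq ‖b x‖ ‖u x‖, sq_nonneg ‖w x‖]
  have hwu : ‖w x‖ * ‖u x‖ ≤ X / 2 := by linarith [two_mul_le_add_sq ‖w x‖ ‖u x‖, sq_nonneg ‖b x‖]
  have hadvect {v : E3 → E3} (hv : ‖v x‖ ≤ M) : |advect v φ x| ≤ M * (c / R) :=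
    (abs_advect_le v φ x).trans (by gcongr)
  have hdiffusion : X * (lap φ x + advect u φ x) ≤ X * (2 * (c / R) + M * (c / R)) := by
    gcongr
    · linarith [hφ.lap_le hc x]
    · exact (le_abs_self _).trans (hadvect hu)
  have hhessian : |∑ j, u x j * advect u (pd j φ) x| ≤ c / R * X :=
    calc |∑ j, u x j * advect u (pd j φ) x| ≤ ‖u x‖ * (‖u x‖ * (c / R)) :=
          (abs_sum_mul_advect_le u u (grad φ) x).trans <| by
            gcongr
            exact (hφ.sqrt_gradSq_grad_le hc x).trans hscale
      _ ≤ c / R * X := by linarith [mul_le_mul_of_nonneg_left huu hk]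
  have hlorentz : |advect b φ x * ∑ j, b x j * u x j| ≤ M * (c / R) * (X / 2) := by
    rw [abs_mul]
    exact mul_le_mul (hadvect hb) ((abs_sum_mul_le _ _).trans hbu) (abs_nonneg _) (by positivity)
  have hcross : |∑ j, w x j * crossProduct (grad φ x) (u x) j| ≤ c / R * (X / 2) :=
    calc _ ≤ ‖w x‖ * (c / R * ‖u x‖) := (abs_sum_mul_crossProduct_le _ _ _).trans (by gcongr)
      _ ≤ c / R * (X / 2) := by linarith [mul_le_mul_of_nonneg_left hwu hk]
  have hslack : 0 ≤ M * (c / R) * X := by positivity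
  have hexpand : 2 * c * (1 + M) / R * X = 2 * (c / R) * X + 2 * (M * (c / R) * X) := by ring
  rw [cutoffFlux, hexpand]
  linarith [(abs_le.1 hhessian).1, (abs_le.1 hlorentz).1, (abs_le.1 hcross).2]

lemma IsCutoff.neg_le_vdiv_term (hφ : IsCutoff c R φ) (w : E3 → E3) (x : E3) :
    -((c / R) ^ 2 * ‖w x‖ ^ 2) ≤ φ x * vdiv w x ^ 2 + vdiv w x * advect w φ x := by
  refine neg_le_quadratic (hφ.nonneg x) (by positivity) ?_
  calc advect w φ x ^ 2 ≤ (‖w x‖ * ‖grad φ x‖) ^ 2 := sq_le_sq.2 <| by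
        rw [abs_of_nonneg (by positivity : 0 ≤ ‖w x‖ * ‖grad φ x‖)]
        exact abs_advect_le w φ x
    _ = ‖w x‖ ^ 2 * ‖grad φ x‖ ^ 2 := mul_pow _ _ _
    _ ≤ ‖w x‖ ^ 2 * ((c / R) ^ 2 * φ x) :=
        mul_le_mul_of_nonneg_left (hφ.norm_grad_sq_le x) (sq_nonneg _)
    _ ≤ 4 * ((c / R) ^ 2 * ‖w x‖ ^ 2) * φ x := by
        have : 0 ≤ (c / R) ^ 2 * ‖w x‖ ^ 2 * φ x := mul_nonneg (by positivity) (hφ.nonneg x)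
        linarith

lemma IsCutoff.mul_gradSq_sub_energyBalance_le (hc : 0 ≤ c) (hR : 1 ≤ R) (hφ : IsCutoff c R φ)
    (hu : ‖u x‖ ≤ M) (hb : ‖b x‖ ≤ M) (hE : ∀ j, |lap (fun y => E y j) x| ≤ ℓ) :
    φ x * (1 / 2 * (gradSq u x + gradSq b x + gradSq w x)) - energyBalance u w b W E φ x
      ≤ (1 + c) ^ 2 * (1 + M) / R * (‖u x‖ ^ 2 + ‖b x‖ ^ 2 + ‖w x‖ ^ 2)
        + (1 + M) * R * gradSq W x + 3 * ℓ * ‖u x‖ := by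
  have hR0 : 0 < R := one_pos.trans_le hR
  have hM : 0 ≤ M := (norm_nonneg _).trans hu
  have hφ0 := hφ.nonneg x
  have hflux := hφ.cutoffFlux_le (w := w) hc hR hu hb
  have hwork := correctorWork_le (w := w) (W := W) hR0 hu hb hE
  have hcurl : 0 ≤ 1 / 2 * φ x * ∑ j, (curl3 u x j - 2 * w x j) ^ 2 := by positivity
  have hgradSq : 0 ≤ φ x * (1 / 2 * (gradSq b x + gradSq w x)) :=
    mul_nonneg hφ0 (by linarith [gradSq_nonneg b x, gradSq_nonneg w x])
  have hvdiv : -(c ^ 2 * (1 + M) / R * (‖u x‖ ^ 2 + ‖b x‖ ^ 2 + ‖w x‖ ^ 2))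
      ≤ φ x * vdiv w x ^ 2 + vdiv w x * advect w φ x := by
    refine le_trans (neg_le_neg ?_) (hφ.neg_le_vdiv_term w x)
    calc (c / R) ^ 2 * ‖w x‖ ^ 2 ≤ c ^ 2 / R * ‖w x‖ ^ 2 := by
          rw [div_pow]
          gcongr
          exact le_self_pow₀ hR two_ne_zero
      _ ≤ c ^ 2 * (1 + M) / R * (‖u x‖ ^ 2 + ‖b x‖ ^ 2 + ‖w x‖ ^ 2) := by
          gcongr
          · exact le_mul_of_one_le_right (sq_nonneg c) (by linarith)
          · linarith [sq_nonneg ‖u x‖, sq_nonneg ‖b x‖]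
  rw [energyBalance]
  linear_combination hflux + hwork + hcurl + hgradSq + hvdiv

end PointwiseBounds

/-! ### The Caccioppoli inequality -/

section Caccioppoli

variable {c K M R : ℝ} {φ P q : E3 → ℝ} {u w b E : E3 → E3}

lemma setIntegral_add_add {F G I : E3 → ℝ} (hF : Continuous F) (hG : Continuous G)
    (hI : Continuous I) (ρ : ℝ) : ∫ x in ball3 ρ, (F x + G x + I x)
      = (∫ x in ball3 ρ, F x) + (∫ x in ball3 ρ, G x) + ∫ x in ball3 ρ, I x := by
  have hFG : IntegrableOn (fun x => F x + G x) (ball3 ρ) := integrableOn_ball3 (hF.add hG) ρ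
  rw [integral_add hFG (integrableOn_ball3 hI ρ),
    integral_add (integrableOn_ball3 hF ρ) (integrableOn_ball3 hG ρ)]

lemma IsCutoff.setIntegral_le (hφ : IsCutoff c R φ) {F : E3 → ℝ} (hF : ContDiff ℝ (⊤ : ℕ∞) F)
    (hF0 : ∀ x, 0 ≤ F x) : ∫ x in ball3 R, F x ≤ ∫ x, φ x * F x := by
  calc ∫ x in ball3 R, F x = ∫ x in ball3 R, φ x * F x :=
        setIntegral_congr_fun measurableSet_ball fun x hx => by
          rw [hφ.eq_one x hx, one_mul]
    _ ≤ ∫ x, φ x * F x := setIntegral_le_integral (hφ.isTestFunction.mul hF).integrable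
        (.of_forall fun x => mul_nonneg (hφ.nonneg x) (hF0 x))

lemma IsCorrector.setIntegral_gradSq_le (hR : 1 ≤ R) (h : IsCorrector K R φ u q E) :
    R * ∫ x in ball3 (2 * R), gradSq (fun y => grad q y - E y) x
      ≤ K / R * ∫ x in ball3 (2 * R), ‖u x‖ ^ 2 := by
  have hR0 : 0 < R := by linarith
  have hW := (h.isTestFunction.grad.sub h.isTestFunction_error).gradSq.integrable
  calc R * ∫ x in ball3 (2 * R), gradSq (fun y => grad q y - E y) x
      ≤ R * (K / R ^ 2 * ∫ x in ball3 (2 * R), ‖u x‖ ^ 2) := by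
        gcongr
        exact (setIntegral_le_integral hW (.of_forall fun x => gradSq_nonneg _ x)).trans
          h.integral_gradSq_le
    _ = K / R * ∫ x in ball3 (2 * R), ‖u x‖ ^ 2 := by
        field_simp

lemma mul_sq_setIntegral_norm_le (hK : 0 ≤ K) (hR : 1 ≤ R) (hu : Continuous u) :
    K / R ^ 5 * (∫ x in ball3 (2 * R), ‖u x‖) ^ 2
      ≤ 8 * K * unitVol / R * ∫ x in ball3 (2 * R), ‖u x‖ ^ 2 := by
  have hR0 : 0 < R := by linarith
  have hv := unitVol_pos
  have hU : 0 ≤ ∫ x in ball3 (2 * R), ‖u x‖ ^ 2 := integral_nonneg fun x => by positivity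
  calc K / R ^ 5 * (∫ x in ball3 (2 * R), ‖u x‖) ^ 2
      ≤ K / R ^ 5 * ((2 * R) ^ 3 * unitVol * ∫ x in ball3 (2 * R), ‖u x‖ ^ 2) := by
        gcongr
        exact sq_setIntegral_le (by positivity) hu.norm fun x => norm_nonneg _
    _ = 8 * K * unitVol / R ^ 2 * ∫ x in ball3 (2 * R), ‖u x‖ ^ 2 := by
        field_simp
        ring
    _ ≤ 8 * K * unitVol / R * ∫ x in ball3 (2 * R), ‖u x‖ ^ 2 := by
        gcongr
        exact le_self_pow₀ hR two_ne_zero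

lemma IsMMPSolution.setIntegral_gradSq_le_of_isCorrector (H : IsMMPSolution u w b P)
    (hc : 0 ≤ c) (hR : 1 ≤ R) (hφ : IsCutoff c R φ)
    (h : IsCorrector K R φ u q E) (hu : ∀ x, ‖u x‖ ≤ M) (hb : ∀ x, ‖b x‖ ≤ M) :
    1 / 2 * ∫ x in ball3 R, (gradSq u x + gradSq b x + gradSq w x)
      ≤ (1 + c) ^ 2 * (1 + M) / R * (∫ x in ball3 (2 * R), (‖u x‖ ^ 2 + ‖b x‖ ^ 2 + ‖w x‖ ^ 2))
        + (1 + M) * (R * ∫ x in ball3 (2 * R), gradSq (fun y => grad q y - E y) x)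
        + 3 * (K / R ^ 5 * (∫ x in ball3 (2 * R), ‖u x‖) ^ 2) := by
  have hsu := H.smooth_u
  have hsw := H.smooth_w
  have hsb := H.smooth_b
  have hφs := hφ.isTestFunction
  set W : E3 → E3 := fun y => grad q y - E y
  set D : E3 → ℝ := fun x => 1 / 2 * (gradSq u x + gradSq b x + gradSq w x)
  have hD : ContDiff ℝ (⊤ : ℕ∞) D := by fun_prop
  have hW := h.isTestFunction.grad.sub h.isTestFunction_error
  have hgradSq := hW.gradSq.smooth.continuous
  have balance := H.null_energy (hφs.mono (by linarith)) h.isTestFunction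
    h.isTestFunction_error h.vdiv_eq_zero
  have htest : IsTestFunction (7 * R / 4) fun x => φ x * D x - energyBalance u w b W E φ x :=
    ((hφs.mul hD).mono (by linarith)).sub balance.toIsTestFunction
  set ℓ := K / R ^ 5 * ∫ x in ball3 (2 * R), ‖u x‖ with hℓ
  calc 1 / 2 * ∫ x in ball3 R, (gradSq u x + gradSq b x + gradSq w x)
      = ∫ x in ball3 R, D x := (integral_const_mul _ _).symm
    _ ≤ ∫ x, φ x * D x := hφ.setIntegral_le hD fun x => mul_nonneg (by norm_num) <| by
        linarith [gradSq_nonneg u x, gradSq_nonneg b x, gradSq_nonneg w x]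
    _ = ∫ x, (φ x * D x - energyBalance u w b W E φ x) := by
        rw [integral_sub (hφs.mul hD).integrable balance.integrable, balance.integral_eq_zero,
          sub_zero]
    _ ≤ ∫ x in ball3 (2 * R), ((1 + c) ^ 2 * (1 + M) / R * (‖u x‖ ^ 2 + ‖b x‖ ^ 2 + ‖w x‖ ^ 2)
          + (1 + M) * R * gradSq W x + 3 * ℓ * ‖u x‖) := by
        refine integral_le_setIntegral htest.integrable ?_ (fun x _ =>
          hφ.mul_gradSq_sub_energyBalance_le hc hR (hu x) (hb x) fun j => h.abs_lap_error_le j x)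
          fun x => htest.eq_zero_of_notMem_ball3 (by linarith)
        fun_prop
    _ = _ := by
        rw [setIntegral_add_add (by fun_prop) (by fun_prop) (by fun_prop), integral_const_mul,
          integral_const_mul, integral_const_mul, hℓ]
        ring

lemma exists_setIntegral_gradSq_le : ∃ C : ℝ, 0 ≤ C ∧
    ∀ (u w b : E3 → E3) (P : E3 → ℝ) (M R : ℝ), IsMMPSolution u w b P →
    (∀ x, ‖u x‖ ≤ M) → (∀ x, ‖b x‖ ≤ M) → 1 ≤ R →
    ∫ x in ball3 R, (gradSq u x + gradSq b x + gradSq w x)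
      ≤ C * (1 + M) / R * ∫ x in ball3 (2 * R), (‖u x‖ ^ 2 + ‖b x‖ ^ 2 + ‖w x‖ ^ 2) := by
  obtain ⟨c, hc, cutoff⟩ := exists_isCutoff
  obtain ⟨K, hK, corrector⟩ := exists_isCorrector c
  have hv := unitVol_pos
  refine ⟨2 * ((1 + c) ^ 2 + K + 24 * K * unitVol), by positivity,
    fun u w b P M R H hu hb hR => ?_⟩
  have hR0 : 0 < R := one_pos.trans_le hR
  have hM : 0 ≤ M := (norm_nonneg _).trans (hu 0)
  obtain ⟨φ, hφ⟩ := cutoff R hR0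
  obtain ⟨q, E, h⟩ := corrector R φ u hR0 hφ H.smooth_u H.div_u
  set U := ∫ x in ball3 (2 * R), ‖u x‖ ^ 2
  set X := ∫ x in ball3 (2 * R), (‖u x‖ ^ 2 + ‖b x‖ ^ 2 + ‖w x‖ ^ 2)
  have hUX : U ≤ X := by
    have hcu := H.smooth_u.continuous
    have hcw := H.smooth_w.continuous
    have hcb := H.smooth_b.continuous
    exact integral_mono (integrableOn_ball3 (by fun_prop) _) (integrableOn_ball3 (by fun_prop) _)
      fun x => by linarith [sq_nonneg ‖b x‖, sq_nonneg ‖w x‖]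
  have henergy := H.setIntegral_gradSq_le_of_isCorrector hc hR hφ h hu hb
  have hcorr : (1 + M) * (R * ∫ x in ball3 (2 * R), gradSq (fun y => grad q y - E y) x)
      ≤ (1 + M) * (K / R * X) := by
    refine mul_le_mul_of_nonneg_left ((h.setIntegral_gradSq_le hR).trans ?_) (by positivity)
    gcongr
  have herr : 3 * (K / R ^ 5 * (∫ x in ball3 (2 * R), ‖u x‖) ^ 2)
      ≤ 3 * ((1 + M) * (8 * K * unitVol / R * X)) := by
    refine mul_le_mul_of_nonneg_left ?_ (by norm_num)
    refine (mul_sq_setIntegral_norm_le hK hR H.smooth_u.continuous).trans ?_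
    exact (mul_le_mul_of_nonneg_left hUX (by positivity)).trans
      (le_mul_of_one_le_left (by positivity) (by linarith))
  have hexpand : 2 * ((1 + c) ^ 2 + K + 24 * K * unitVol) * (1 + M) / R * X
      = 2 * ((1 + c) ^ 2 * (1 + M) / R * X + (1 + M) * (K / R * X)
        + 3 * ((1 + M) * (8 * K * unitVol / R * X))) := by ring
  linarith

end Caccioppoli

/-! ### From `L²` to `Lᵖ` -/

section lpnorm

variable {v u w b : E3 → E3} {M p r ρ : ℝ}

lemma lpnorm_nonneg (p : ℝ) (v : E3 → E3) (S : Set E3) : 0 ≤ lpnorm p v S :=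
  rpow_nonneg (integral_nonneg fun _ => by positivity) _

lemma setIntegral_norm_rpow_le (hv : Continuous v) (hr : 0 < r) (hrp : r ≤ p) (hρ : 0 < ρ) :
    ∫ x in ball3 ρ, ‖v x‖ ^ r ≤ (ρ ^ 3 * unitVol) ^ (1 - r / p) * lpnorm p v (ball3 ρ) ^ r := by
  have hp : 0 < p := hr.trans_le hrp
  have hV : 0 < ρ ^ 3 * unitVol := mul_pos (pow_pos hρ 3) unitVol_pos
  have hI : 0 ≤ ∫ x in ball3 ρ, ‖v x‖ ^ r := integral_nonneg fun _ => by positivity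
  have hJ : 0 ≤ ∫ x in ball3 ρ, ‖v x‖ ^ p := integral_nonneg fun _ => by positivity
  have hpow : ∀ x, (‖v x‖ ^ r) ^ (p / r) = ‖v x‖ ^ p := fun x => by
    rw [← rpow_mul (norm_nonneg _), mul_div_cancel₀ p hr.ne']
  have jensen := setIntegral_rpow_le ((one_le_div hr).2 hrp) hρ
    (hv.norm.rpow_const fun _ => .inr hr.le) fun x => rpow_nonneg (norm_nonneg (v x)) r
  simp only [hpow] at jensen
  calc ∫ x in ball3 ρ, ‖v x‖ ^ r = ((∫ x in ball3 ρ, ‖v x‖ ^ r) ^ (p / r)) ^ (r / p) := by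
        rw [← rpow_mul hI, div_mul_div_cancel₀ hr.ne', div_self hp.ne', rpow_one]
    _ ≤ ((ρ ^ 3 * unitVol) ^ (p / r - 1) * ∫ x in ball3 ρ, ‖v x‖ ^ p) ^ (r / p) := by
        gcongr
    _ = (ρ ^ 3 * unitVol) ^ (1 - r / p) * lpnorm p v (ball3 ρ) ^ r := by
        rw [mul_rpow (by positivity) hJ, ← rpow_mul hV.le, lpnorm, ← rpow_mul hJ]
        congr 2 <;> field_simp

lemma setIntegral_norm_sq_le (hv : Continuous v) (hM : ∀ x, ‖v x‖ ≤ M) (hr : 0 < r)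
    (hr2 : r ≤ 2) (hrp : r ≤ p) (hρ : 0 < ρ) :
    ∫ x in ball3 ρ, ‖v x‖ ^ 2
      ≤ M ^ (2 - r) * ((ρ ^ 3 * unitVol) ^ (1 - r / p) * lpnorm p v (ball3 ρ) ^ r) := by
  have hM0 : 0 ≤ M := (norm_nonneg _).trans (hM 0)
  have interpolation : ∀ x, ‖v x‖ ^ 2 ≤ M ^ (2 - r) * ‖v x‖ ^ r := fun x => by
    calc ‖v x‖ ^ 2 = ‖v x‖ ^ (2 - r) * ‖v x‖ ^ r := by
          rw [← rpow_add_of_nonneg (norm_nonneg _) (by linarith) hr.le, sub_add_cancel, rpow_two]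
      _ ≤ M ^ (2 - r) * ‖v x‖ ^ r := by
          gcongr
          exact hM x
  have hvr : Continuous fun x => ‖v x‖ ^ r := hv.norm.rpow_const fun _ => .inr hr.le
  calc ∫ x in ball3 ρ, ‖v x‖ ^ 2 ≤ ∫ x in ball3 ρ, M ^ (2 - r) * ‖v x‖ ^ r :=
        integral_mono (integrableOn_ball3 (by fun_prop) _) (integrableOn_ball3 (by fun_prop) _)
          interpolation
    _ = M ^ (2 - r) * ∫ x in ball3 ρ, ‖v x‖ ^ r := integral_const_mul _ _
    _ ≤ _ := mul_le_mul_of_nonneg_left (setIntegral_norm_rpow_le hv hr hrp hρ) (by positivity)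

lemma setIntegral_sum_norm_sq_le (hu : Continuous u) (hb : Continuous b) (hw : Continuous w)
    (hMu : ∀ x, ‖u x‖ ≤ M) (hMb : ∀ x, ‖b x‖ ≤ M) (hMw : ∀ x, ‖w x‖ ≤ M) (hr : 0 < r)
    (hr2 : r ≤ 2) (hrp : r ≤ p) (hρ : 0 < ρ) :
    ∫ x in ball3 ρ, (‖u x‖ ^ 2 + ‖b x‖ ^ 2 + ‖w x‖ ^ 2)
      ≤ 3 * M ^ (2 - r) * (ρ ^ 3 * unitVol) ^ (1 - r / p)
        * (lpnorm p u (ball3 ρ) + lpnorm p b (ball3 ρ) + lpnorm p w (ball3 ρ)) ^ r := by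
  have hM0 : 0 ≤ M := (norm_nonneg _).trans (hMu 0)
  have hv := unitVol_pos
  have hnu := lpnorm_nonneg p u (ball3 ρ)
  have hnb := lpnorm_nonneg p b (ball3 ρ)
  have hnw := lpnorm_nonneg p w (ball3 ρ)
  set N := lpnorm p u (ball3 ρ) + lpnorm p b (ball3 ρ) + lpnorm p w (ball3 ρ) with hN
  have bound : ∀ v : E3 → E3, Continuous v → (∀ x, ‖v x‖ ≤ M) → lpnorm p v (ball3 ρ) ≤ N →
      ∫ x in ball3 ρ, ‖v x‖ ^ 2 ≤ M ^ (2 - r) * ((ρ ^ 3 * unitVol) ^ (1 - r / p) * N ^ r) :=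
    fun v hvc hvM hvN => (setIntegral_norm_sq_le hvc hvM hr hr2 hrp hρ).trans <| by
      have := lpnorm_nonneg p v (ball3 ρ)
      gcongr
  rw [setIntegral_add_add (by fun_prop) (by fun_prop) (by fun_prop)]
  linarith [bound u hu hMu (by linarith), bound b hb hMb (by linarith),
    bound w hw hMw (by linarith)]

lemma volume_rpow_eq {R : ℝ} (hR : 0 < R) (p : ℝ) :
    ((2 * R) ^ 3 * unitVol) ^ (1 - 3 / 2 / p)
      = (8 * unitVol) ^ (1 - 3 / 2 / p) * (R * R ^ (2 - 9 / (2 * p))) := by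
  have hv := unitVol_pos
  have hcube : (2 * R) ^ 3 * unitVol = 8 * unitVol * R ^ (3 : ℝ) := by
    rw [show (3 : ℝ) = (3 : ℕ) from rfl, rpow_natCast]
    ring
  have hexp : (3 : ℝ) * (1 - 3 / 2 / p) = 1 + (2 - 9 / (2 * p)) := by ring
  rw [hcube, mul_rpow (by positivity) (by positivity), ← rpow_mul hR.le, hexp, rpow_add hR,
    rpow_one]

end lpnorm

theorem dirichlet_estimate_bounded_mid_p_general (p : ℝ) (hp : 3 / 2 ≤ p) (Mu Mb Mw : ℝ) :
    ∃ C : ℝ, 0 < C ∧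
      ∀ u w b : E3 → E3, ∀ P : E3 → ℝ, IsMMPSolution u w b P →
      (∀ x, ‖u x‖ ≤ Mu) → (∀ x, ‖b x‖ ≤ Mb) → (∀ x, ‖w x‖ ≤ Mw) →
      ∀ R : ℝ, 1 ≤ R →
        ∫ x in ball3 R, (gradSq u x + gradSq b x + gradSq w x)
          ≤ C * R ^ (2 - 9 / (2 * p))
            * (lpnorm p u (ball3 (2 * R)) + lpnorm p b (ball3 (2 * R))
              + lpnorm p w (ball3 (2 * R))) ^ (3 / 2 : ℝ) := by
  obtain ⟨K, hK, caccioppoli⟩ := exists_setIntegral_gradSq_le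
  have hv := unitVol_pos
  set M := max |Mu| (max |Mb| |Mw|)
  have hM : 0 ≤ M := (abs_nonneg Mu).trans (le_max_left _ _)
  set A := K * (1 + M) * (3 * M ^ (2 - 3 / 2 : ℝ) * (8 * unitVol) ^ (1 - 3 / 2 / p)) with hA
  refine ⟨A + 1, by positivity, fun u w b P H hu hb hw R hR => ?_⟩
  have hR0 : 0 < R := one_pos.trans_le hR
  have hMu : ∀ x, ‖u x‖ ≤ M := fun x => (hu x).trans <| by grind
  have hMb : ∀ x, ‖b x‖ ≤ M := fun x => (hb x).trans <| by grind
  have hMw : ∀ x, ‖w x‖ ≤ M := fun x => (hw x).trans <| by grind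
  have interpolation := setIntegral_sum_norm_sq_le H.smooth_u.continuous H.smooth_b.continuous
    H.smooth_w.continuous hMu hMb hMw (by norm_num) (by norm_num) hp (by positivity : 0 < 2 * R)
  set N := lpnorm p u (ball3 (2 * R)) + lpnorm p b (ball3 (2 * R)) + lpnorm p w (ball3 (2 * R))
  have hN : 0 ≤ N := add_nonneg (add_nonneg (lpnorm_nonneg ..) (lpnorm_nonneg ..))
    (lpnorm_nonneg ..)
  calc ∫ x in ball3 R, (gradSq u x + gradSq b x + gradSq w x)
      ≤ K * (1 + M) / R * ∫ x in ball3 (2 * R), (‖u x‖ ^ 2 + ‖b x‖ ^ 2 + ‖w x‖ ^ 2) :=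
        caccioppoli u w b P M R H hMu hMb hR
    _ ≤ K * (1 + M) / R * (3 * M ^ (2 - 3 / 2 : ℝ) * ((2 * R) ^ 3 * unitVol) ^ (1 - 3 / 2 / p)
          * N ^ (3 / 2 : ℝ)) := mul_le_mul_of_nonneg_left interpolation (by positivity)
    _ = A * R ^ (2 - 9 / (2 * p)) * N ^ (3 / 2 : ℝ) := by
        rw [volume_rpow_eq hR0, hA]
        field_simp
    _ ≤ (A + 1) * R ^ (2 - 9 / (2 * p)) * N ^ (3 / 2 : ℝ) := by
        gcongr
        exact le_add_of_nonneg_right zero_le_one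

/-- Dirichlet integral estimate for bounded solutions, `p ∈ [3/2, 9/4)`. -/
theorem dirichlet_estimate_bounded_mid_p
    (p : ℝ) (hp1 : 3 / 2 ≤ p) (hp2 : p < 9 / 4)
    (Mu Mb Mw : ℝ) :
    ∃ C : ℝ, 0 < C ∧
      ∀ u w b : E3 → E3, ∀ P : E3 → ℝ, IsMMPSolution u w b P →
      (∀ x, ‖u x‖ ≤ Mu) → (∀ x, ‖b x‖ ≤ Mb) → (∀ x, ‖w x‖ ≤ Mw) →
      ∀ R : ℝ, 1 < R →
        (∫ x in ball3 R, (gradSq u x + gradSq b x + gradSq w x)) ≤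
          C * (R ^ (1 - 9 / (2 * p)) + R ^ (2 - 9 / (2 * p))) *
            (lpnorm p u (ball3 (2 * R)) + lpnorm p b (ball3 (2 * R))
              + lpnorm p w (ball3 (2 * R))) ^ ((3:ℝ)/2) := by
  obtain ⟨C, hC, estimate⟩ := dirichlet_estimate_bounded_mid_p_general p hp1 Mu Mb Mw
  refine ⟨C, hC, fun u w b P H hu hb hw R hR => (estimate u w b P H hu hb hw R hR.le).trans ?_⟩
  have hN := add_nonneg (add_nonneg (lpnorm_nonneg p u (ball3 (2 * R)))
    (lpnorm_nonneg p b (ball3 (2 * R)))) (lpnorm_nonneg p w (ball3 (2 * R)))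
  have hR0 : 0 < R := one_pos.trans hR
  gcongr
  exact le_add_of_nonneg_left (by positivity)
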